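/- arXiv:quant-ph/0505084 — 4 statements merged into one kernel-verified Lean document; each statement's English description precedes it below -/
import Mathlib

section
/- Let (a_1,…,a_k) be a perfect measurement on the complex d×d matrices, let θ₀ be a density matrix, and let P be a probability measure on Ω = {1,…,k}^ℕ satisfying the cylinder condition for θ₀. Then at least one of the following alternatives holds: (i) for P-almost every ω, for every m ∈ ℕ, lim_{n→∞} tr(Θ_n(ω)^m) = 1 (the quantum trajectory purifies with probability 1); or (ii) there exist an orthogonal projection p among the complex d×d matrices with rank p ≥ 2 and nonnegative real numbers λ_1,…,λ_k such that p a_i* a_i p = λ_i p for all i = 1,…,k. -/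
open Matrix MeasureTheory Filter
open scoped ComplexOrder

/-- For a finite word `w = (i₁,…,iₙ)` (as a list `[i₁,…,iₙ]`), the matrix
`A_w := a_{iₙ} ⋯ a_{i₁}`. -/
noncomputable def wordMatrix {I : Type*} {d : ℕ} (a : I → Matrix (Fin d) (Fin d) ℂ)
    (w : List I) : Matrix (Fin d) (Fin d) ℂ :=
  (w.reverse.map a).prod

/-- The quantum trajectory `Θ_n(ω) = A_w θ₀ A_w* / tr(A_w θ₀ A_w*)` with
`w = (ω₁,…,ω_n)`, set to the fixed density matrix `σ` when the trace vanishes. -/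
noncomputable def traj {d k : ℕ} (a : Fin k → Matrix (Fin d) (Fin d) ℂ)
    (θ₀ σ : Matrix (Fin d) (Fin d) ℂ) (n : ℕ) (ω : ℕ → Fin k) :
    Matrix (Fin d) (Fin d) ℂ :=
  let A := wordMatrix a (List.ofFn fun j : Fin n => ω (j : ℕ))
  if (A * θ₀ * Aᴴ).trace ≠ 0 then ((A * θ₀ * Aᴴ).trace)⁻¹ • (A * θ₀ * Aᴴ) else σ

/-- `P` satisfies the cylinder condition for `θ₀`:
`P{ω : ω₁ = i₁,…,ω_n = i_n} = tr(A_w θ₀ A_w*)`. -/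
def CylinderCondition {d k : ℕ} (a : Fin k → Matrix (Fin d) (Fin d) ℂ)
    (θ₀ : Matrix (Fin d) (Fin d) ℂ) (P : Measure (ℕ → Fin k)) : Prop :=
  ∀ (n : ℕ) (w : Fin n → Fin k),
    P {ω | ∀ j : Fin n, ω (j : ℕ) = w j} =
      ENNReal.ofReal
        ((wordMatrix a (List.ofFn w) * θ₀ * (wordMatrix a (List.ofFn w))ᴴ).trace.re)

/-!
The Frobenius norm `‖Θ‖` of a density matrix is at most `tr Θ = 1` and measures its purity. Since
`‖BB*‖ = ‖B*B‖` and `B*B = ∑ B*aᵢ*aᵢB`, the triangle inequality shows that a measurement cannot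
decrease the expectation of `‖Θₙ‖`. These expectations are bounded by `1`, so the nonnegative
one-step gains, regarded as functions of `Θₙ`, have finite total expectation and tend to `0` almost
surely. By compactness of the set of density matrices, `Θₙ` approaches the states of zero gain.
For such a state `BB*`, strict convexity of the Frobenius norm makes every `B*aᵢ*aᵢB` a multiple of
`B*B`, so each `aᵢ*aᵢ` compresses to a scalar on the support of the state. If no such support has
dimension at least two, all limit points are pure.
-/

namespace QuantumTrajectory

section LinearAlgebra

variable {l m n ι K R 𝕜 : Type*}

lemma exists_eq_vecMulVec_of_rank_le_one [Field K] [Fintype n] {X : Matrix m n K}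
    (hX : X.rank ≤ 1) : ∃ (u : m → K) (v : n → K), X = vecMulVec u v := by
  classical
  obtain ⟨u, hu⟩ := finrank_le_one_iff.1 hX
  choose v hv using fun j => hu ⟨X.mulVecLin (Pi.single j 1), LinearMap.mem_range_self _ _⟩
  refine ⟨u, v, ext fun i j => ?_⟩
  simpa [vecMulVec_apply, mul_comm] using (congrFun (congrArg Subtype.val (hv j)) i).symm

lemma trace_pow_eq_one_of_rank_le_one [Field K] [Fintype n] [DecidableEq n] {X : Matrix n n K}
    (hrank : X.rank ≤ 1) (htr : X.trace = 1) {m : ℕ} (hm : m ≠ 0) : (X ^ m).trace = 1 := by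
  have hidem : IsIdempotentElem X := by
    obtain ⟨u, v, rfl⟩ := exists_eq_vecMulVec_of_rank_le_one hrank
    rw [trace_vecMulVec, dotProduct_comm] at htr
    rw [IsIdempotentElem, vecMulVec_mul_vecMulVec, htr, one_smul]
  rw [hidem.pow_eq hm, htr]

lemma sum_conjTranspose_mul_mul [Semiring R] [StarRing R] [Fintype ι] [Fintype m] [Fintype n]
    [DecidableEq n] {a : ι → Matrix m n R} (ha : ∑ i, (a i)ᴴ * a i = 1) (B : Matrix n l R) :
    ∑ i, Bᴴ * ((a i)ᴴ * a i) * B = Bᴴ * B := by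
  rw [← Matrix.sum_mul, ← Matrix.mul_sum, ha, Matrix.mul_one]

lemma sum_trace_mul_mul_conjTranspose [CommSemiring R] [StarRing R] [Fintype ι] [Fintype m]
    [Fintype n] [DecidableEq n] {a : ι → Matrix m n R} (ha : ∑ i, (a i)ᴴ * a i = 1)
    (X : Matrix n n R) : ∑ i, (a i * X * (a i)ᴴ).trace = X.trace := by
  calc ∑ i, (a i * X * (a i)ᴴ).trace = ∑ i, ((a i)ᴴ * a i * X).trace :=
        Finset.sum_congr rfl fun i _ => by rw [trace_mul_comm, Matrix.mul_assoc]
    _ = X.trace := by rw [← trace_sum, ← Finset.sum_mul, ha, Matrix.one_mul]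

variable [RCLike 𝕜] [Fintype n]

lemma exists_isStarProjection_mul {X : Matrix n n 𝕜} (hX : X.IsHermitian) :
    ∃ Y, IsStarProjection (X * Y) ∧ X * Y * X = X := by
  classical
  have hcont (f : ℝ → ℝ) : ContinuousOn f (spectrum ℝ X) := X.finite_real_spectrum.continuousOn f
  have hid : cfc (fun x : ℝ => x) X = X := cfc_id' ℝ X hX.isSelfAdjoint
  have hmul : X * cfc (fun x : ℝ => x⁻¹) X = cfc (fun x : ℝ => x * x⁻¹) X := by
    rw [cfc_mul _ _ X (hcont _) (hcont _), hid]
  refine ⟨cfc (fun x : ℝ => x⁻¹) X, ⟨?_, ?_⟩, ?_⟩ <;> rw [hmul]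
  · rw [IsIdempotentElem, ← cfc_mul _ _ X (hcont _) (hcont _)]
    simp only [← mul_assoc, mul_inv_mul_cancel]
  · exact cfc_predicate _ X
  · calc cfc (fun x : ℝ => x * x⁻¹) X * X
        = cfc (fun x : ℝ => x * x⁻¹) X * cfc (fun x : ℝ => x) X := by rw [hid]
      _ = cfc (fun x : ℝ => x * x⁻¹ * x) X := (cfc_mul _ _ X (hcont _) (hcont _)).symm
      _ = X := by simp only [mul_inv_mul_cancel, hid]

open scoped MatrixOrder in
lemma exists_eq_mul_conjTranspose_self {X : Matrix n n 𝕜} (hX : X.PosSemidef) :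
    ∃ B, X = B * Bᴴ := by
  classical
  exact CStarAlgebra.nonneg_iff_eq_mul_star_self.1 hX.nonneg

end LinearAlgebra

section StrictConvexity

variable {E ι : Type*} [NormedAddCommGroup E] [NormedSpace ℝ E] [StrictConvexSpace ℝ E]

lemma exists_nonneg_eq_smul_sum_of_norm_sum_eq {s : Finset ι} {v : ι → E}
    (h : ‖∑ j ∈ s, v j‖ = ∑ j ∈ s, ‖v j‖) {i : ι} (hi : i ∈ s) :
    ∃ r : ℝ, 0 ≤ r ∧ v i = r • ∑ j ∈ s, v j := by
  classical
  rcases eq_or_ne (∑ j ∈ s, v j) 0 with hsum | hsum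
  · rw [hsum, norm_zero, eq_comm, Finset.sum_eq_zero_iff_of_nonneg fun _ _ => norm_nonneg _] at h
    exact ⟨0, le_rfl, by simpa using h i hi⟩
  · have hray : SameRay ℝ (v i) (∑ j ∈ s.erase i, v j) := by
      refine sameRay_iff_norm_add.2 ((norm_add_le _ _).antisymm ?_)
      rw [Finset.add_sum_erase s v hi, h, ← Finset.add_sum_erase s _ hi]
      gcongr
      exact norm_sum_le _ _
    have hray' : SameRay ℝ (∑ j ∈ s, v j) (v i) := by
      rw [← Finset.add_sum_erase s v hi]
      exact (SameRay.refl (v i)).add_left hray.symm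
    obtain ⟨r, hr, hr'⟩ := hray'.exists_nonneg_left hsum
    exact ⟨r, hr, hr'.symm⟩

end StrictConvexity

section Frobenius

open scoped Matrix.Norms.Frobenius

variable {l m n ι 𝕜 : Type*} [RCLike 𝕜] [Fintype l] [Fintype m] [Fintype n]

lemma frobenius_norm_sq (M : Matrix m n 𝕜) : ‖M‖ ^ 2 = ∑ i, ∑ j, ‖M i j‖ ^ 2 := by
  rw [frobenius_norm_def, ← Real.sqrt_eq_rpow, Real.sq_sqrt (by positivity)]
  simp only [Real.rpow_two]

lemma frobenius_norm_sq_eq_re_trace (M : Matrix m n 𝕜) :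
    ‖M‖ ^ 2 = RCLike.re (M * Mᴴ).trace := by
  simp only [frobenius_norm_sq, trace, diag_apply, mul_apply, conjTranspose_apply, map_sum,
    RCLike.star_def, RCLike.mul_conj, ← RCLike.ofReal_pow, RCLike.ofReal_re]

instance strictConvexSpace_frobenius : StrictConvexSpace ℝ (Matrix m n 𝕜) :=
  LinearIsometry.strictConvexSpace (F := EuclideanSpace 𝕜 (m × n))
    { toFun := fun M => WithLp.toLp 2 fun q => M q.1 q.2
      map_add' := fun _ _ => rfl
      map_smul' := fun _ _ => rfl
      norm_map' := fun M => by
        rw [← sq_eq_sq₀ (norm_nonneg _) (norm_nonneg _), EuclideanSpace.norm_sq_eq,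
          Fintype.sum_prod_type, frobenius_norm_sq]
        rfl }

lemma norm_mul_conjTranspose_self (M : Matrix m n 𝕜) : ‖M * Mᴴ‖ = ‖Mᴴ * M‖ := by
  rw [← sq_eq_sq₀ (norm_nonneg _) (norm_nonneg _), frobenius_norm_sq_eq_re_trace,
    frobenius_norm_sq_eq_re_trace]
  simp only [conjTranspose_mul, conjTranspose_conjTranspose]
  rw [Matrix.mul_assoc, trace_mul_comm]
  simp only [Matrix.mul_assoc]

lemma norm_le_re_trace {X : Matrix n n 𝕜} (hX : X.PosSemidef) : ‖X‖ ≤ RCLike.re X.trace := by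
  obtain ⟨B, rfl⟩ := exists_eq_mul_conjTranspose_self hX
  calc ‖B * Bᴴ‖ ≤ ‖B‖ * ‖Bᴴ‖ := frobenius_norm_mul B Bᴴ
    _ = RCLike.re (B * Bᴴ).trace := by
      rw [frobenius_norm_conjTranspose, ← sq, frobenius_norm_sq_eq_re_trace]

variable [Fintype ι]

/-- The increase of the total Frobenius norm of an unnormalised state under the measurement `a`. -/
noncomputable def purityGap (a : ι → Matrix m n 𝕜) (X : Matrix n n 𝕜) : ℝ :=
  ∑ i, ‖a i * X * (a i)ᴴ‖ - ‖X‖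

lemma continuous_purityGap (a : ι → Matrix m n 𝕜) : Continuous (purityGap a) := by
  unfold purityGap
  fun_prop

lemma purityGap_smul (a : ι → Matrix m n 𝕜) (c : 𝕜) (X : Matrix n n 𝕜) :
    purityGap a (c • X) = ‖c‖ * purityGap a X := by
  simp only [purityGap, Matrix.mul_smul, Matrix.smul_mul, norm_smul, mul_sub, Finset.mul_sum]

variable [DecidableEq n] {a : ι → Matrix m n 𝕜}

/-- `‖MM*‖ = ‖M*M‖` with `M = aᵢB` turns the gap into the defect of a triangle inequality. -/
lemma purityGap_mul_conjTranspose_self (ha : ∑ i, (a i)ᴴ * a i = 1) (B : Matrix n l 𝕜) :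
    purityGap a (B * Bᴴ) =
      ∑ i, ‖Bᴴ * ((a i)ᴴ * a i) * B‖ - ‖∑ i, Bᴴ * ((a i)ᴴ * a i) * B‖ := by
  have hterm (i : ι) : ‖a i * (B * Bᴴ) * (a i)ᴴ‖ = ‖Bᴴ * ((a i)ᴴ * a i) * B‖ := by
    simpa only [conjTranspose_mul, Matrix.mul_assoc] using norm_mul_conjTranspose_self (a i * B)
  rw [purityGap, sum_conjTranspose_mul_mul ha, norm_mul_conjTranspose_self B]
  simp only [hterm]

lemma purityGap_nonneg (ha : ∑ i, (a i)ᴴ * a i = 1) {X : Matrix n n 𝕜} (hX : X.PosSemidef) :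
    0 ≤ purityGap a X := by
  obtain ⟨B, rfl⟩ := exists_eq_mul_conjTranspose_self hX
  rw [purityGap_mul_conjTranspose_self ha, sub_nonneg]
  exact norm_sum_le _ _

lemma exists_isStarProjection_of_purityGap_eq_zero (ha : ∑ i, (a i)ᴴ * a i = 1)
    {X : Matrix n n 𝕜} (hX : X.PosSemidef) (hgap : purityGap a X = 0) :
    ∃ p : Matrix n n 𝕜, IsStarProjection p ∧ p.rank = X.rank ∧
      ∀ i, ∃ r : ℝ, 0 ≤ r ∧ p * (a i)ᴴ * a i * p = (r : 𝕜) • p := by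
  obtain ⟨Y, hp, hpX⟩ := exists_isStarProjection_mul hX.isHermitian
  have hrank : (X * Y).rank = X.rank :=
    (rank_mul_le_left X Y).antisymm (by simpa only [hpX] using rank_mul_le_left (X * Y) X)
  obtain ⟨B, rfl⟩ := exists_eq_mul_conjTranspose_self hX
  refine ⟨B * Bᴴ * Y, hp, hrank, fun i => ?_⟩
  rw [purityGap_mul_conjTranspose_self ha, sub_eq_zero] at hgap
  obtain ⟨r, hr, hri⟩ := exists_nonneg_eq_smul_sum_of_norm_sum_eq hgap.symm (Finset.mem_univ i)
  rw [sum_conjTranspose_mul_mul ha, RCLike.real_smul_eq_coe_smul (K := 𝕜)] at hri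
  set C := Bᴴ * Y with hC
  have hpC : B * Bᴴ * Y = B * C := Matrix.mul_assoc B Bᴴ Y
  rw [hpC] at hp ⊢
  have hadj : Cᴴ * Bᴴ = B * C := by
    rw [← conjTranspose_mul]
    exact hp.isSelfAdjoint
  refine ⟨r, hr, ?_⟩
  calc B * C * (a i)ᴴ * a i * (B * C) = Cᴴ * (Bᴴ * ((a i)ᴴ * a i) * B) * C := by
        nth_rw 1 [← hadj]
        simp only [Matrix.mul_assoc]
    _ = (r : 𝕜) • (Cᴴ * Bᴴ * (B * C)) := by
        rw [hri, Matrix.mul_smul, Matrix.smul_mul]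
        simp only [Matrix.mul_assoc]
    _ = (r : 𝕜) • (B * C) := by rw [hadj, hp.isIdempotentElem]

end Frobenius

section DensityMatrices

variable {n 𝕜 : Type*} [RCLike 𝕜] [Fintype n]

variable (n 𝕜) in
/-- The density matrices, i.e. the states of the quantum system with algebra `Matrix n n 𝕜`. -/
def densityMatrices : Set (Matrix n n 𝕜) := {X | X.PosSemidef ∧ X.trace = 1}

lemma isClosed_densityMatrices : IsClosed (densityMatrices n 𝕜) := by
  have hset : densityMatrices n 𝕜 = {X | Xᴴ = X} ∩
      (⋂ x : n → 𝕜, {X | 0 ≤ star x ⬝ᵥ (X *ᵥ x)}) ∩ {X | X.trace = 1} := by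
    ext X
    simp [densityMatrices, posSemidef_iff_dotProduct_mulVec, IsHermitian]
  rw [hset]
  refine ((isClosed_eq (by fun_prop) (by fun_prop)).inter (isClosed_iInter fun x => ?_)).inter
    (isClosed_eq (by fun_prop) (by fun_prop))
  exact isClosed_le (by fun_prop) (by fun_prop)

open scoped Matrix.Norms.Frobenius in
lemma isCompact_densityMatrices : IsCompact (densityMatrices n 𝕜) := by
  have : ProperSpace (Matrix n n 𝕜) := FiniteDimensional.proper 𝕜 _
  refine (isCompact_closedBall 0 1).of_isClosed_subset isClosed_densityMatrices fun X hX => ?_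
  simpa [hX.2] using norm_le_re_trace hX.1

/-- The conditional state after an outcome with unnormalised state `X`; `σ` is its arbitrary value
on outcomes of probability zero. -/
noncomputable def normalizeTrace (σ X : Matrix n n 𝕜) : Matrix n n 𝕜 :=
  if X.trace ≠ 0 then X.trace⁻¹ • X else σ

lemma normalizeTrace_mem_densityMatrices (σ : Matrix n n 𝕜) {X : Matrix n n 𝕜}
    (hX : X.PosSemidef) (htr : X.trace ≠ 0) : normalizeTrace σ X ∈ densityMatrices n 𝕜 := by
  rw [normalizeTrace, if_pos htr]
  exact ⟨hX.smul (inv_nonneg.2 hX.trace_nonneg), by simp [htr]⟩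

open scoped Matrix.Norms.Frobenius in
lemma re_trace_mul_purityGap_normalizeTrace {m ι : Type*} [Fintype m] [Fintype ι]
    (a : ι → Matrix m n 𝕜) (σ : Matrix n n 𝕜) {X : Matrix n n 𝕜} (hX : X.PosSemidef) :
    RCLike.re X.trace * purityGap a (normalizeTrace σ X) = purityGap a X := by
  by_cases htr : X.trace = 0
  · simp [hX.trace_eq_zero_iff.1 htr, purityGap]
  · have hnorm : RCLike.re X.trace = ‖X.trace‖ := by
      rw [← RCLike.ofReal_re (K := 𝕜) ‖X.trace‖, RCLike.norm_of_nonneg' hX.trace_nonneg]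
    rw [normalizeTrace, if_pos htr, purityGap_smul, norm_inv, hnorm,
      mul_inv_cancel_left₀ (norm_ne_zero_iff.2 htr)]

end DensityMatrices

section Limits

lemma tendsto_comp_of_isCompact_of_eq_on_fiber {α X Y Z : Type*} [TopologicalSpace X]
    [TopologicalSpace Y] [T2Space Y] [TopologicalSpace Z] {K : Set X} (hK : IsCompact K)
    {g : X → Y} (hg : ContinuousOn g K) {φ : X → Z} (hφ : ContinuousOn φ K) {y : Y} {z : Z}
    (hfiber : ∀ x ∈ K, g x = y → φ x = z) {l : Filter α} {u : α → X} (hu : ∀ᶠ t in l, u t ∈ K)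
    (hgu : Tendsto (fun t => g (u t)) l (nhds y)) : Tendsto (fun t => φ (u t)) l (nhds z) := by
  rw [tendsto_iff_ultrafilter] at hgu ⊢
  intro U hU
  have huK : ∀ᶠ t in (U : Filter α), u t ∈ K := hU hu
  obtain ⟨x, hxK, hx⟩ := hK.ultrafilter_le_nhds (U.map u) (le_principal_iff.2 huK)
  have hux : Tendsto u U (nhdsWithin x K) := tendsto_nhdsWithin_iff.2 ⟨hx, huK⟩
  have hgx : g x = y := tendsto_nhds_unique ((hg x hxK).tendsto.comp hux) (hgu U hU)
  exact hfiber x hxK hgx ▸ (hφ x hxK).tendsto.comp hux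

lemma ae_tendsto_zero_of_tsum_lintegral_ne_top {α : Type*} [MeasurableSpace α] {μ : Measure α}
    {f : ℕ → α → ENNReal} (hf : ∀ n, AEMeasurable (f n) μ) (h : ∑' n, ∫⁻ x, f n x ∂μ ≠ ⊤) :
    ∀ᵐ x ∂μ, Tendsto (fun n => f n x) atTop (nhds 0) := by
  rw [← lintegral_tsum hf] at h
  filter_upwards [ae_lt_top' (AEMeasurable.tsum hf) h] with x hx
  exact ENNReal.tendsto_atTop_zero_of_tsum_ne_top hx.ne

end Limits

section Words

variable {ι : Type*}

lemma sum_ofFn_succ {M : Type*} [AddCommMonoid M] [Fintype ι] (f : List ι → M) (n : ℕ) :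
    ∑ w : Fin (n + 1) → ι, f (List.ofFn w) =
      ∑ w : Fin n → ι, ∑ i, f (List.ofFn w ++ [i]) := by
  rw [Finset.sum_comm, ← Fintype.sum_prod_type', ← (Fin.snocEquiv fun _ => ι).sum_comp]
  refine Finset.sum_congr rfl fun q _ => ?_
  rw [List.ofFn_succ']
  simp [Fin.snocEquiv]

lemma measurable_ofFn_prefix {β : Type*} [Countable ι] [MeasurableSpace ι]
    [MeasurableSingletonClass ι] [MeasurableSpace β] (f : List ι → β) (n : ℕ) :
    Measurable fun ω : ℕ → ι => f (List.ofFn fun j : Fin n => ω j) :=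
  (measurable_of_countable fun w : Fin n → ι => f (List.ofFn w)).comp (by fun_prop)

variable {d : ℕ}

/-- The state `A_w θ A_w*` after the outcomes `w`, whose trace is the probability of `w`. -/
noncomputable def unnormalizedState (a : ι → Matrix (Fin d) (Fin d) ℂ)
    (θ : Matrix (Fin d) (Fin d) ℂ) (w : List ι) : Matrix (Fin d) (Fin d) ℂ :=
  wordMatrix a w * θ * (wordMatrix a w)ᴴ

lemma posSemidef_unnormalizedState (a : ι → Matrix (Fin d) (Fin d) ℂ)
    {θ : Matrix (Fin d) (Fin d) ℂ} (hθ : θ.PosSemidef) (w : List ι) :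
    (unnormalizedState a θ w).PosSemidef :=
  hθ.mul_mul_conjTranspose_same _

lemma unnormalizedState_nil (a : ι → Matrix (Fin d) (Fin d) ℂ) (θ : Matrix (Fin d) (Fin d) ℂ) :
    unnormalizedState a θ [] = θ := by
  simp [unnormalizedState, wordMatrix]

lemma unnormalizedState_append_singleton (a : ι → Matrix (Fin d) (Fin d) ℂ)
    (θ : Matrix (Fin d) (Fin d) ℂ) (w : List ι) (i : ι) :
    unnormalizedState a θ (w ++ [i]) = a i * unnormalizedState a θ w * (a i)ᴴ := by
  simp [unnormalizedState, wordMatrix, Matrix.mul_assoc]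

variable [Fintype ι] {a : ι → Matrix (Fin d) (Fin d) ℂ} {θ : Matrix (Fin d) (Fin d) ℂ}

lemma sum_trace_unnormalizedState (ha : ∑ i, (a i)ᴴ * a i = 1) (n : ℕ) :
    ∑ w : Fin n → ι, (unnormalizedState a θ (List.ofFn w)).trace = θ.trace := by
  induction n with
  | zero => simp [unnormalizedState_nil]
  | succ n ih =>
    rw [sum_ofFn_succ fun w => (unnormalizedState a θ w).trace, ← ih]
    simp only [unnormalizedState_append_singleton, sum_trace_mul_mul_conjTranspose ha]

open scoped Matrix.Norms.Frobenius in
lemma sum_norm_unnormalizedState_le (ha : ∑ i, (a i)ᴴ * a i = 1) (hθ : θ.PosSemidef) (n : ℕ) :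
    ∑ w : Fin n → ι, ‖unnormalizedState a θ (List.ofFn w)‖ ≤ θ.trace.re := by
  rw [← sum_trace_unnormalizedState ha n, Complex.re_sum]
  exact Finset.sum_le_sum fun w _ => norm_le_re_trace (posSemidef_unnormalizedState a hθ _)

open scoped Matrix.Norms.Frobenius in
lemma sum_purityGap_unnormalizedState (a : ι → Matrix (Fin d) (Fin d) ℂ)
    (θ : Matrix (Fin d) (Fin d) ℂ) (n : ℕ) :
    ∑ w : Fin n → ι, purityGap a (unnormalizedState a θ (List.ofFn w)) =
      ∑ w : Fin (n + 1) → ι, ‖unnormalizedState a θ (List.ofFn w)‖ -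
        ∑ w : Fin n → ι, ‖unnormalizedState a θ (List.ofFn w)‖ := by
  rw [sum_ofFn_succ fun w => ‖unnormalizedState a θ w‖, ← Finset.sum_sub_distrib]
  simp only [unnormalizedState_append_singleton, purityGap]

open scoped Matrix.Norms.Frobenius in
lemma sum_range_sum_purityGap_le (ha : ∑ i, (a i)ᴴ * a i = 1) (hθ : θ.PosSemidef) (N : ℕ) :
    ∑ n ∈ Finset.range N, ∑ w : Fin n → ι, purityGap a (unnormalizedState a θ (List.ofFn w)) ≤
      θ.trace.re := by
  simp only [sum_purityGap_unnormalizedState]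
  rw [Finset.sum_range_sub fun n => ∑ w : Fin n → ι, ‖unnormalizedState a θ (List.ofFn w)‖]
  exact (sub_le_self _ (by positivity)).trans (sum_norm_unnormalizedState_le ha hθ N)

end Words

section Trajectory

variable {d k : ℕ} {a : Fin k → Matrix (Fin d) (Fin d) ℂ} {θ σ : Matrix (Fin d) (Fin d) ℂ}
  {P : Measure (ℕ → Fin k)}

lemma traj_eq_normalizeTrace (a : Fin k → Matrix (Fin d) (Fin d) ℂ)
    (θ σ : Matrix (Fin d) (Fin d) ℂ) (n : ℕ) (ω : ℕ → Fin k) :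
    traj a θ σ n ω =
      normalizeTrace σ (unnormalizedState a θ (List.ofFn fun j : Fin n => ω j)) :=
  rfl

lemma lintegral_ofFn_prefix (hP : CylinderCondition a θ P) (f : List (Fin k) → ENNReal) (n : ℕ) :
    ∫⁻ ω, f (List.ofFn fun j : Fin n => ω j) ∂P =
      ∑ w : Fin n → Fin k, f (List.ofFn w) *
        ENNReal.ofReal (unnormalizedState a θ (List.ofFn w)).trace.re := by
  have hprefix : Measurable fun (ω : ℕ → Fin k) (j : Fin n) => ω j := by fun_prop
  rw [← lintegral_map (f := fun w : Fin n → Fin k => f (List.ofFn w)) (measurable_of_finite _)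
    hprefix, lintegral_fintype]
  refine Finset.sum_congr rfl fun w _ => ?_
  rw [Measure.map_apply hprefix (measurableSet_singleton w), unnormalizedState, ← hP n w]
  congr 2
  ext ω
  exact funext_iff

lemma ae_traj_mem_densityMatrices (hθ : θ.PosSemidef) (hP : CylinderCondition a θ P) :
    ∀ᵐ ω ∂P, ∀ n, traj a θ σ n ω ∈ densityMatrices (Fin d) ℂ := by
  refine ae_all_iff.2 fun n => ?_
  let f : List (Fin k) → ENNReal := fun w => if (unnormalizedState a θ w).trace = 0 then 1 else 0
  have hf : ∫⁻ ω, f (List.ofFn fun j : Fin n => ω j) ∂P = 0 := by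
    rw [lintegral_ofFn_prefix hP]
    refine Finset.sum_eq_zero fun w _ => ?_
    by_cases htr : (unnormalizedState a θ (List.ofFn w)).trace = 0 <;> simp [f, htr]
  filter_upwards [(lintegral_eq_zero_iff (measurable_ofFn_prefix f n)).1 hf] with ω hω
  rw [traj_eq_normalizeTrace]
  refine normalizeTrace_mem_densityMatrices σ (posSemidef_unnormalizedState a hθ _) fun htr => ?_
  simp [f, htr] at hω

lemma lintegral_purityGap_traj (ha : ∑ i, (a i)ᴴ * a i = 1) (hθ : θ.PosSemidef)
    (hP : CylinderCondition a θ P) (n : ℕ) :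
    ∫⁻ ω, ENNReal.ofReal (purityGap a (traj a θ σ n ω)) ∂P = ENNReal.ofReal
      (∑ w : Fin n → Fin k, purityGap a (unnormalizedState a θ (List.ofFn w))) := by
  have hpsd (w : List (Fin k)) := posSemidef_unnormalizedState a hθ w
  simp only [traj_eq_normalizeTrace]
  rw [lintegral_ofFn_prefix hP
      fun w => ENNReal.ofReal (purityGap a (normalizeTrace σ (unnormalizedState a θ w))),
    ENNReal.ofReal_sum_of_nonneg fun w _ => purityGap_nonneg ha (hpsd _)]
  refine Finset.sum_congr rfl fun w _ => ?_
  rw [mul_comm, ← ENNReal.ofReal_mul (Complex.nonneg_iff.1 (hpsd _).trace_nonneg).1]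
  exact congrArg ENNReal.ofReal (re_trace_mul_purityGap_normalizeTrace a σ (hpsd _))

lemma ae_tendsto_purityGap_traj (ha : ∑ i, (a i)ᴴ * a i = 1) (hθ : θ.PosSemidef)
    (hP : CylinderCondition a θ P) :
    ∀ᵐ ω ∂P, Tendsto (fun n => purityGap a (traj a θ σ n ω)) atTop (nhds 0) := by
  have hmeas (n : ℕ) : Measurable fun ω => ENNReal.ofReal (purityGap a (traj a θ σ n ω)) :=
    measurable_ofFn_prefix (fun w => ENNReal.ofReal
      (purityGap a (normalizeTrace σ (unnormalizedState a θ w)))) n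
  have hsum : ∑' n, ∫⁻ ω, ENNReal.ofReal (purityGap a (traj a θ σ n ω)) ∂P ≠ ⊤ := by
    refine ((ENNReal.tsum_le_of_sum_range_le fun N => ?_).trans_lt
      (ENNReal.ofReal_lt_top (r := θ.trace.re))).ne
    simp only [lintegral_purityGap_traj ha hθ hP]
    rw [← ENNReal.ofReal_sum_of_nonneg fun n _ => Finset.sum_nonneg fun w _ =>
      purityGap_nonneg ha (posSemidef_unnormalizedState a hθ _)]
    exact ENNReal.ofReal_le_ofReal (sum_range_sum_purityGap_le ha hθ N)
  filter_upwards [ae_traj_mem_densityMatrices hθ hP,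
    ae_tendsto_zero_of_tsum_lintegral_ne_top (fun n => (hmeas n).aemeasurable) hsum] with ω hmem hω
  refine ((ENNReal.tendsto_toReal ENNReal.zero_ne_top).comp hω).congr fun n => ?_
  exact ENNReal.toReal_ofReal (purityGap_nonneg ha (hmem n).1)

end Trajectory

end QuantumTrajectory

open QuantumTrajectory in
theorem purification_main_general {d k : ℕ}
    (a : Fin k → Matrix (Fin d) (Fin d) ℂ)
    (ha : ∑ i, (a i)ᴴ * a i = 1)
    (θ₀ : Matrix (Fin d) (Fin d) ℂ)
    (hθ₀ : θ₀.PosSemidef)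
    (σ : Matrix (Fin d) (Fin d) ℂ)
    (P : Measure (ℕ → Fin k))
    (hP : CylinderCondition a θ₀ P) :
    (∀ᵐ ω ∂P, ∀ m : ℕ, 1 ≤ m →
        Tendsto (fun n : ℕ => ((traj a θ₀ σ n ω) ^ m).trace) atTop (nhds 1)) ∨
    (∃ p : Matrix (Fin d) (Fin d) ℂ, p.IsHermitian ∧ p * p = p ∧ 2 ≤ p.rank ∧
        ∀ i : Fin k, ∃ l : ℝ, 0 ≤ l ∧ p * (a i)ᴴ * a i * p = (l : ℂ) • p) := by
  refine or_iff_not_imp_right.2 fun hdark => ?_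
  have hrank (X : Matrix (Fin d) (Fin d) ℂ) (hX : X ∈ densityMatrices (Fin d) ℂ)
      (hgap : purityGap a X = 0) : X.rank ≤ 1 := by
    obtain ⟨p, hp, hpX, hscalar⟩ := exists_isStarProjection_of_purityGap_eq_zero ha hX.1 hgap
    by_contra! hlt
    exact hdark ⟨p, hp.isSelfAdjoint, hp.isIdempotentElem, hpX ▸ hlt, hscalar⟩
  filter_upwards [ae_traj_mem_densityMatrices hθ₀ hP, ae_tendsto_purityGap_traj ha hθ₀ hP]
    with ω hmem hgap m hm
  exact tendsto_comp_of_isCompact_of_eq_on_fiber isCompact_densityMatrices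
    (continuous_purityGap a).continuousOn (by fun_prop : Continuous _).continuousOn
    (fun X hX h => trace_pow_eq_one_of_rank_le_one (hrank X hX h) hX.2
      (Nat.one_le_iff_ne_zero.1 hm))
    (Eventually.of_forall hmem) hgap

/-- Theorem (main): for repeated perfect measurement, either the quantum trajectory
purifies with probability 1, or there is a projection `p` of rank at least two on
which every `a_i* a_i` compresses to a scalar. -/
theorem purification_main {d k : ℕ}
    (a : Fin k → Matrix (Fin d) (Fin d) ℂ)
    (ha : ∑ i, (a i)ᴴ * a i = 1)
    (θ₀ : Matrix (Fin d) (Fin d) ℂ)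
    (hθ₀ : θ₀.PosSemidef ∧ θ₀.trace = 1)
    (σ : Matrix (Fin d) (Fin d) ℂ)
    (hσ : σ.PosSemidef ∧ σ.trace = 1)
    (P : Measure (ℕ → Fin k)) [IsProbabilityMeasure P]
    (hP : CylinderCondition a θ₀ P) :
    (∀ᵐ ω ∂P, ∀ m : ℕ, 1 ≤ m →
        Tendsto (fun n : ℕ => ((traj a θ₀ σ n ω) ^ m).trace) atTop (nhds 1)) ∨
    (∃ p : Matrix (Fin d) (Fin d) ℂ, p.IsHermitian ∧ p * p = p ∧ 2 ≤ p.rank ∧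
        ∀ i : Fin k, ∃ l : ℝ, 0 ≤ l ∧ p * (a i)ᴴ * a i * p = (l : ℂ) • p) :=
  purification_main_general a ha θ₀ hθ₀.1 σ P hP
end

section
/- Let (a_1,…,a_k) be a perfect measurement on the complex d×d matrices, let θ₀ be a density matrix, and let P be a probability measure on Ω = {1,…,k}^ℕ satisfying the cylinder condition for θ₀. Then either (i) for P-almost every ω, for every m ∈ ℕ, lim_{n→∞} tr(Θ_n(ω)^m) = 1; or (ii) there exists an orthogonal projection p among the complex d×d matrices with rank p ≥ 2 such that for every l ∈ ℕ and every word w = (i_1,…,i_l) with letters in {1,…,k} there exists λ_w ≥ 0 with p A_w* A_w p = λ_w p (p is a dark projection). -/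
/-! Averaged over the outcomes of a measurement, the Frobenius norm of a state cannot decrease:
writing `X = Y * Yᴴ`, this is the triangle inequality for `Yᴴ * Y = ∑ j, (b j * Y)ᴴ * (b j * Y)`.
As it is bounded by the trace, the expected gains of norm along the trajectory form a summable
series, so almost surely the gains tend to zero. Density matrices being compact, every limit point
`ρ` of such a trajectory gains no norm under any further measurement. By strict convexity the
triangle inequality is then an equality only if each `A_w` acts on the support of `ρ` as a multiple
of an isometry, that is, if the support projection of `ρ` is dark. When all dark projections have
rank at most one, every limit point is therefore a pure state. -/

open Matrix MeasureTheory Filter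
open scoped ComplexOrder

section StrictConvexity

variable {E J : Type*} [NormedAddCommGroup E] [NormedSpace ℝ E] [StrictConvexSpace ℝ E]

lemma sameRay_sum_of_sum_norm_le {s : Finset J} {x : J → E}
    (h : ∑ i ∈ s, ‖x i‖ ≤ ‖∑ i ∈ s, x i‖) {j : J} (hj : j ∈ s) :
    SameRay ℝ (∑ i ∈ s, x i) (x j) := by
  classical
  rw [← Finset.add_sum_erase s x hj] at h ⊢
  rw [← Finset.add_sum_erase s (fun i => ‖x i‖) hj] at h
  have hrest : SameRay ℝ (x j) (∑ i ∈ s.erase j, x i) := by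
    refine sameRay_iff_norm_add.2 ((norm_add_le _ _).antisymm (le_trans ?_ h))
    gcongr
    exact norm_sum_le _ _
  exact (SameRay.refl _).add_left hrest.symm

end StrictConvexity

section MatrixFacts

section Field

variable {K n : Type*} [Field K] [Fintype n] {X : Matrix n n K}

lemma mul_self_eq_trace_smul_of_rank_le_one (hX : X.rank ≤ 1) : X * X = X.trace • X := by
  classical
  obtain ⟨v, hv⟩ := finrank_le_one_iff.1 hX
  choose c hc using fun j => hv ⟨X.col j, Pi.single j 1, by simp⟩
  have hXvc : X = vecMulVec v c := by
    ext i j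
    simpa [vecMulVec_apply, mul_comm] using congrFun (congrArg Subtype.val (hc j)).symm i
  rw [hXvc, vecMulVec_mul_vecMulVec, trace_vecMulVec, dotProduct_comm, vecMulVec_smul]

lemma trace_pow_eq_one_of_rank_le_one [DecidableEq n] (htrace : X.trace = 1) (hrank : X.rank ≤ 1)
    {m : ℕ} (hm : m ≠ 0) : (X ^ m).trace = 1 := by
  have hidem : IsIdempotentElem X := by
    rw [IsIdempotentElem, mul_self_eq_trace_smul_of_rank_le_one hrank, htrace, one_smul]
  rw [hidem.pow_eq hm, htrace]

end Field

variable {𝕜 l m n : Type*} [RCLike 𝕜] [Fintype l] [Fintype m] [Fintype n]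

lemma exists_eq_mul_conjTranspose_of_posSemidef {X : Matrix n n 𝕜} (hX : X.PosSemidef) :
    ∃ Y : Matrix n n 𝕜, X = Y * Yᴴ := by
  classical
  open scoped MatrixOrder in exact CStarAlgebra.nonneg_iff_eq_mul_star_self.1 hX.nonneg

lemma exists_isStarProjection_mul_of_isHermitian {X : Matrix n n 𝕜} (hX : X.IsHermitian) :
    ∃ R : Matrix n n 𝕜, IsStarProjection (X * R) ∧ (X * R).rank = X.rank := by
  classical
  have hX : IsSelfAdjoint X := hX
  have hcont (f : ℝ → ℝ) : ContinuousOn f (spectrum ℝ X) := X.finite_real_spectrum.continuousOn f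
  have hmul (f g : ℝ → ℝ) : cfc f X * cfc g X = cfc (fun x => f x * g x) X :=
    (cfc_mul f g X (hcont f) (hcont g)).symm
  have hid : cfc (fun x : ℝ => x) X = X := cfc_id' ℝ X
  have hXR : X * cfc (·⁻¹ : ℝ → ℝ) X = cfc (fun x : ℝ => x * x⁻¹) X := by rw [← hmul, hid]
  have hXRX : X * cfc (·⁻¹ : ℝ → ℝ) X * X = X := by
    calc X * cfc (·⁻¹ : ℝ → ℝ) X * X
        = cfc (fun x : ℝ => x * x⁻¹) X * cfc (fun x : ℝ => x) X := by rw [hXR, hid]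
      _ = cfc (fun x : ℝ => x * x⁻¹ * x) X := hmul _ _
      _ = X := by simp only [mul_inv_mul_cancel, hid]
  refine ⟨cfc (·⁻¹ : ℝ → ℝ) X, ⟨?_, ?_⟩, (rank_mul_le_left _ _).antisymm ?_⟩
  · rw [IsIdempotentElem, ← Matrix.mul_assoc, hXRX]
  · rw [hXR]
    exact cfc_predicate _ X
  · conv_lhs => rw [← hXRX]
    exact rank_mul_le_left _ _

open scoped Matrix.Norms.Frobenius

lemma frobenius_norm_sq_eq_re_trace (X : Matrix m n 𝕜) :
    ‖X‖ ^ 2 = RCLike.re (Xᴴ * X).trace := by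
  have hnonneg : 0 ≤ ∑ i, ∑ j, ‖X i j‖ ^ 2 := by positivity
  simp only [frobenius_norm_def, ← Real.sqrt_eq_rpow, Real.rpow_two, Real.sq_sqrt hnonneg]
  rw [Finset.sum_comm]
  simp only [trace, diag_apply, Matrix.mul_apply, conjTranspose_apply, RCLike.star_def,
    RCLike.conj_mul, map_sum, ← RCLike.ofReal_pow, RCLike.ofReal_re]

-- Supplies `StrictConvexSpace ℝ (Matrix m n 𝕜)` for the Frobenius norm.
instance frobenius_innerProductSpaceable : InnerProductSpaceable (Matrix m n 𝕜) where
  parallelogram_identity X Y := by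
    simp only [← sq, frobenius_norm_sq_eq_re_trace, conjTranspose_add, conjTranspose_sub,
      Matrix.add_mul, Matrix.mul_add, Matrix.sub_mul, Matrix.mul_sub, trace_add, trace_sub,
      map_add, map_sub]
    ring

lemma frobenius_norm_mul_conjTranspose_self (Y : Matrix m n 𝕜) : ‖Y * Yᴴ‖ = ‖Yᴴ * Y‖ := by
  refine (pow_left_inj₀ (norm_nonneg _) (norm_nonneg _) two_ne_zero).1 ?_
  simp only [frobenius_norm_sq_eq_re_trace, conjTranspose_mul, conjTranspose_conjTranspose]
  rw [Matrix.mul_assoc, trace_mul_comm]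
  simp only [Matrix.mul_assoc]

lemma frobenius_norm_conj_mul_conjTranspose_self (B : Matrix l m 𝕜) (Y : Matrix m n 𝕜) :
    ‖B * (Y * Yᴴ) * Bᴴ‖ = ‖(B * Y)ᴴ * (B * Y)‖ := by
  rw [← frobenius_norm_mul_conjTranspose_self, conjTranspose_mul]
  simp only [Matrix.mul_assoc]

lemma frobenius_norm_le_re_trace {X : Matrix n n 𝕜} (hX : X.PosSemidef) :
    ‖X‖ ≤ RCLike.re X.trace := by
  obtain ⟨Y, rfl⟩ := exists_eq_mul_conjTranspose_of_posSemidef hX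
  calc ‖Y * Yᴴ‖ ≤ ‖Y‖ * ‖Yᴴ‖ := frobenius_norm_mul Y Yᴴ
    _ = RCLike.re (Y * Yᴴ).trace := by
      rw [frobenius_norm_conjTranspose, ← sq, frobenius_norm_sq_eq_re_trace, trace_mul_comm]

end MatrixFacts

section DensityMatrices

variable {𝕜 n : Type*} [RCLike 𝕜] [Fintype n]

/-- The density matrices (states) on `𝕜ⁿ`. -/
def densityMatrices (𝕜 n : Type*) [RCLike 𝕜] [Fintype n] : Set (Matrix n n 𝕜) :=
  {ρ | ρ.PosSemidef ∧ ρ.trace = 1}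

open scoped Matrix.Norms.Frobenius in
lemma densityMatrices_eq_image_sphere :
    densityMatrices 𝕜 n = (fun Y : Matrix n n 𝕜 => Y * Yᴴ) '' Metric.sphere 0 1 := by
  have norm_eq_one_iff (Y : Matrix n n 𝕜) : ‖Y‖ = 1 ↔ (Y * Yᴴ).trace = 1 := by
    have hY := (posSemidef_self_mul_conjTranspose Y).trace_nonneg
    rw [← pow_eq_one_iff_of_nonneg (norm_nonneg Y) two_ne_zero, frobenius_norm_sq_eq_re_trace,
      trace_mul_comm Yᴴ, RCLike.ext_iff (z := (Y * Yᴴ).trace), RCLike.one_re, RCLike.one_im]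
    exact (and_iff_left (RCLike.nonneg_iff.1 hY).2).symm
  ext ρ
  constructor
  · rintro ⟨hρ, htrace⟩
    obtain ⟨Y, rfl⟩ := exists_eq_mul_conjTranspose_of_posSemidef hρ
    exact ⟨Y, mem_sphere_zero_iff_norm.2 ((norm_eq_one_iff Y).2 htrace), rfl⟩
  · rintro ⟨Y, hY, rfl⟩
    exact ⟨posSemidef_self_mul_conjTranspose Y,
      (norm_eq_one_iff Y).1 (mem_sphere_zero_iff_norm.1 hY)⟩

open scoped Matrix.Norms.Frobenius in
lemma isCompact_densityMatrices : IsCompact (densityMatrices 𝕜 n) := by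
  have : ProperSpace (Matrix n n 𝕜) := FiniteDimensional.proper 𝕜 _
  rw [densityMatrices_eq_image_sphere]
  exact (isCompact_sphere _ _).image (by fun_prop)

/-- The state `X / tr X`, or the default state `σ` when `tr X = 0`. -/
noncomputable def normalizedState (σ X : Matrix n n 𝕜) : Matrix n n 𝕜 :=
  if X.trace ≠ 0 then X.trace⁻¹ • X else σ

lemma re_trace_smul_normalizedState (σ : Matrix n n 𝕜) {X : Matrix n n 𝕜} (hX : X.PosSemidef) :
    RCLike.re X.trace • normalizedState σ X = X := by
  have htrace : ((RCLike.re X.trace : ℝ) : 𝕜) = X.trace :=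
    RCLike.conj_eq_iff_re.1 (RCLike.conj_eq_iff_im.2 (RCLike.nonneg_iff.1 hX.trace_nonneg).2)
  rw [RCLike.real_smul_eq_coe_smul (K := 𝕜), htrace, normalizedState]
  split_ifs with h
  · exact smul_inv_smul₀ h X
  · rw [not_not] at h
    rw [h, zero_smul, hX.trace_eq_zero_iff.1 h]

lemma normalizedState_mem_densityMatrices {σ X : Matrix n n 𝕜} (hσ : σ ∈ densityMatrices 𝕜 n)
    (hX : X.PosSemidef) : normalizedState σ X ∈ densityMatrices 𝕜 n := by
  unfold normalizedState
  split_ifs with htrace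
  · refine ⟨hX.smul (inv_nonneg.2 hX.trace_nonneg), ?_⟩
    rw [trace_smul, smul_eq_mul, inv_mul_cancel₀ htrace]
  · exact hσ

end DensityMatrices

section PerfectMeasurements

/-- A perfect measurement with outcomes in `J`: the Kraus operators `b j` satisfy
`∑ j, (b j)ᴴ * b j = 1`. -/
def IsPerfectMeasurement {𝕜 n J : Type*} [RCLike 𝕜] [Fintype n] [DecidableEq n] [Fintype J]
    (b : J → Matrix n n 𝕜) : Prop :=
  ∑ j, (b j)ᴴ * b j = 1

namespace IsPerfectMeasurement

variable {𝕜 m n J : Type*} [RCLike 𝕜] [Fintype n] [DecidableEq n] [Fintype J]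
  {b : J → Matrix n n 𝕜}

lemma sum_conjTranspose_mul_self (hb : IsPerfectMeasurement b) (Y : Matrix n m 𝕜) :
    ∑ j, (b j * Y)ᴴ * (b j * Y) = Yᴴ * Y := by
  calc ∑ j, (b j * Y)ᴴ * (b j * Y) = Yᴴ * (∑ j, (b j)ᴴ * b j) * Y := by
        simp only [conjTranspose_mul, Matrix.mul_sum, Matrix.sum_mul, Matrix.mul_assoc]
    _ = Yᴴ * Y := by rw [show ∑ j, (b j)ᴴ * b j = 1 from hb, Matrix.mul_one]

lemma sum_trace (hb : IsPerfectMeasurement b) (X : Matrix n n 𝕜) :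
    ∑ j, (b j * X * (b j)ᴴ).trace = X.trace := by
  calc ∑ j, (b j * X * (b j)ᴴ).trace = ((∑ j, (b j)ᴴ * b j) * X).trace := by
        simp only [Matrix.sum_mul, trace_sum]
        exact Finset.sum_congr rfl fun j _ => trace_mul_cycle _ _ _
    _ = X.trace := by rw [show ∑ j, (b j)ᴴ * b j = 1 from hb, Matrix.one_mul]

open scoped Matrix.Norms.Frobenius

lemma sum_norm_le_re_trace (hb : IsPerfectMeasurement b) {X : Matrix n n 𝕜}
    (hX : X.PosSemidef) : ∑ j, ‖b j * X * (b j)ᴴ‖ ≤ RCLike.re X.trace := by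
  rw [← hb.sum_trace X, map_sum]
  exact Finset.sum_le_sum fun j _ =>
    frobenius_norm_le_re_trace (hX.mul_mul_conjTranspose_same (b j))

lemma norm_le_sum_norm (hb : IsPerfectMeasurement b) {X : Matrix n n 𝕜} (hX : X.PosSemidef) :
    ‖X‖ ≤ ∑ j, ‖b j * X * (b j)ᴴ‖ := by
  obtain ⟨Y, rfl⟩ := exists_eq_mul_conjTranspose_of_posSemidef hX
  simp only [frobenius_norm_conj_mul_conjTranspose_self]
  rw [frobenius_norm_mul_conjTranspose_self, ← hb.sum_conjTranspose_mul_self]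
  exact norm_sum_le _ _

lemma exists_eq_smul_of_sum_norm_le (hb : IsPerfectMeasurement b) {X R : Matrix n n 𝕜}
    (hX : X.PosSemidef) (hXR : IsStarProjection (X * R))
    (h : ∑ j, ‖b j * X * (b j)ᴴ‖ ≤ ‖X‖) (j : J) :
    ∃ c : ℝ, 0 ≤ c ∧ X * R * (b j)ᴴ * b j * (X * R) = c • (X * R) := by
  obtain ⟨Y, rfl⟩ := exists_eq_mul_conjTranspose_of_posSemidef hX
  have hray : SameRay ℝ (Yᴴ * Y) ((b j * Y)ᴴ * (b j * Y)) := by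
    simp only [frobenius_norm_conj_mul_conjTranspose_self] at h
    rw [frobenius_norm_mul_conjTranspose_self, ← hb.sum_conjTranspose_mul_self] at h
    rw [← hb.sum_conjTranspose_mul_self]
    exact sameRay_sum_of_sum_norm_le h (Finset.mem_univ j)
  rcases eq_or_ne (Yᴴ * Y) 0 with hY | hY
  · exact ⟨0, le_rfl, by simp [conjTranspose_mul_self_eq_zero.1 hY]⟩
  obtain ⟨c, hc, hcY⟩ := hray.exists_nonneg_left hY
  have hadj : Rᴴ * Y * Yᴴ = Y * Yᴴ * R := by
    simpa [star_eq_conjTranspose, Matrix.mul_assoc] using hXR.isSelfAdjoint.star_eq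
  refine ⟨c, hc, ?_⟩
  calc Y * Yᴴ * R * (b j)ᴴ * b j * (Y * Yᴴ * R)
      = Rᴴ * Y * Yᴴ * (b j)ᴴ * b j * (Y * Yᴴ * R) := by rw [hadj]
    _ = Rᴴ * Y * ((b j * Y)ᴴ * (b j * Y)) * (Yᴴ * R) := by
        simp only [conjTranspose_mul, Matrix.mul_assoc]
    _ = c • (Rᴴ * Y * Yᴴ * (Y * Yᴴ * R)) := by
        simp only [← hcY, Matrix.mul_smul, Matrix.smul_mul, Matrix.mul_assoc]
    _ = c • (Y * Yᴴ * R) := by rw [hadj, hXR.isIdempotentElem.eq]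

end IsPerfectMeasurement

end PerfectMeasurements

section Words

variable {I : Type*} {d : ℕ}

lemma wordMatrix_append (a : I → Matrix (Fin d) (Fin d) ℂ) (u v : List I) :
    wordMatrix a (u ++ v) = wordMatrix a v * wordMatrix a u := by
  simp only [wordMatrix, List.reverse_append, List.map_append, List.prod_append]

/-- The unnormalized state `A_w X A_w*` reached from `X` after observing the word `w`. -/
noncomputable def postState (a : I → Matrix (Fin d) (Fin d) ℂ) (X : Matrix (Fin d) (Fin d) ℂ)
    {n : ℕ} (w : Fin n → I) : Matrix (Fin d) (Fin d) ℂ :=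
  wordMatrix a (List.ofFn w) * X * (wordMatrix a (List.ofFn w))ᴴ

lemma postState_posSemidef (a : I → Matrix (Fin d) (Fin d) ℂ) {X : Matrix (Fin d) (Fin d) ℂ}
    (hX : X.PosSemidef) {n : ℕ} (w : Fin n → I) : (postState a X w).PosSemidef :=
  hX.mul_mul_conjTranspose_same _

lemma postState_append (a : I → Matrix (Fin d) (Fin d) ℂ) (X : Matrix (Fin d) (Fin d) ℂ)
    {m n : ℕ} (u : Fin m → I) (v : Fin n → I) :
    postState a X (Fin.append u v) = postState a (postState a X u) v := by
  simp only [postState, List.ofFn_fin_append, wordMatrix_append, conjTranspose_mul,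
    Matrix.mul_assoc]

variable [Fintype I] {a : I → Matrix (Fin d) (Fin d) ℂ} {X : Matrix (Fin d) (Fin d) ℂ}

lemma sum_fin_append {M : Type*} [AddCommMonoid M] {m n : ℕ} (f : (Fin (m + n) → I) → M) :
    ∑ w, f w = ∑ u : Fin m → I, ∑ v : Fin n → I, f (Fin.append u v) := by
  rw [← (Fin.appendEquiv m n).sum_comp, Fintype.sum_prod_type]
  rfl

lemma IsPerfectMeasurement.wordMatrix_ofFn (ha : IsPerfectMeasurement a) (n : ℕ) :
    IsPerfectMeasurement fun w : Fin n → I => wordMatrix a (List.ofFn w) := by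
  induction n with
  | zero => simp [IsPerfectMeasurement, wordMatrix]
  | succ n ih =>
    have hword (w : Fin n → I) (v : Fin 1 → I) :
        wordMatrix a (List.ofFn (Fin.append w v)) = a (v 0) * wordMatrix a (List.ofFn w) := by
      rw [List.ofFn_fin_append, wordMatrix_append]
      simp [wordMatrix]
    rw [IsPerfectMeasurement, sum_fin_append, ← ih]
    refine Finset.sum_congr rfl fun w _ => ?_
    simp only [hword]
    rw [← ha.sum_conjTranspose_mul_self, ← (Equiv.funUnique (Fin 1) I).sum_comp]
    rfl

open scoped Matrix.Norms.Frobenius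

/-- The Frobenius norm of the normalized state after `n` measurements, averaged over the outcomes
with the weights `tr (A_w X A_w*)`. -/
noncomputable def meanNorm (a : I → Matrix (Fin d) (Fin d) ℂ) (n : ℕ)
    (X : Matrix (Fin d) (Fin d) ℂ) : ℝ :=
  ∑ w : Fin n → I, ‖postState a X w‖

lemma meanNorm_add (a : I → Matrix (Fin d) (Fin d) ℂ) (X : Matrix (Fin d) (Fin d) ℂ) (m n : ℕ) :
    meanNorm a (m + n) X = ∑ w : Fin m → I, meanNorm a n (postState a X w) := by
  simp only [meanNorm, sum_fin_append, postState_append]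

lemma meanNorm_zero (a : I → Matrix (Fin d) (Fin d) ℂ) (X : Matrix (Fin d) (Fin d) ℂ) :
    meanNorm a 0 X = ‖X‖ := by
  simp [meanNorm, postState, wordMatrix]

lemma meanNorm_smul (a : I → Matrix (Fin d) (Fin d) ℂ) (X : Matrix (Fin d) (Fin d) ℂ) (n : ℕ)
    {c : ℝ} (hc : 0 ≤ c) : meanNorm a n (c • X) = c * meanNorm a n X := by
  simp only [meanNorm, postState, Matrix.mul_smul, Matrix.smul_mul, norm_smul,
    Real.norm_of_nonneg hc, Finset.mul_sum]

lemma continuous_meanNorm (a : I → Matrix (Fin d) (Fin d) ℂ) (n : ℕ) :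
    Continuous (meanNorm a n) := by
  unfold meanNorm postState
  fun_prop

/-- The expected increase of the Frobenius norm between the measurements `n` and `n + 1`. -/
noncomputable def normGain (a : I → Matrix (Fin d) (Fin d) ℂ) (n : ℕ)
    (X : Matrix (Fin d) (Fin d) ℂ) : ℝ :=
  meanNorm a (n + 1) X - meanNorm a n X

lemma normGain_smul (a : I → Matrix (Fin d) (Fin d) ℂ) (X : Matrix (Fin d) (Fin d) ℂ) (n : ℕ)
    {c : ℝ} (hc : 0 ≤ c) : normGain a n (c • X) = c * normGain a n X := by
  simp only [normGain, meanNorm_smul a X _ hc, mul_sub]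

lemma continuous_normGain (a : I → Matrix (Fin d) (Fin d) ℂ) (n : ℕ) :
    Continuous (normGain a n) :=
  (continuous_meanNorm a (n + 1)).sub (continuous_meanNorm a n)

lemma sum_normGain_postState (a : I → Matrix (Fin d) (Fin d) ℂ) (X : Matrix (Fin d) (Fin d) ℂ)
    (m n : ℕ) : ∑ w : Fin m → I, normGain a n (postState a X w) = normGain a (m + n) X := by
  simp only [normGain, Finset.sum_sub_distrib, ← meanNorm_add, add_assoc]

namespace IsPerfectMeasurement

lemma meanNorm_le_re_trace (ha : IsPerfectMeasurement a) (hX : X.PosSemidef) (n : ℕ) :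
    meanNorm a n X ≤ X.trace.re :=
  (ha.wordMatrix_ofFn n).sum_norm_le_re_trace hX

lemma normGain_nonneg (ha : IsPerfectMeasurement a) (hX : X.PosSemidef) (n : ℕ) :
    0 ≤ normGain a n X := by
  rw [normGain, sub_nonneg, meanNorm_add]
  exact Finset.sum_le_sum fun w _ =>
    (ha.wordMatrix_ofFn 1).norm_le_sum_norm (postState_posSemidef a hX w)

lemma summable_normGain (ha : IsPerfectMeasurement a) (hX : X.PosSemidef) :
    Summable fun n => normGain a n X := by
  refine summable_of_sum_range_le (c := X.trace.re) (ha.normGain_nonneg hX) fun n => ?_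
  have hzero : 0 ≤ meanNorm a 0 X := Finset.sum_nonneg fun _ _ => norm_nonneg _
  have hle := ha.meanNorm_le_re_trace hX n
  simp only [normGain, Finset.sum_range_sub (fun n => meanNorm a n X)]
  linarith

end IsPerfectMeasurement

/-- A dark projection: an orthogonal projection `p` such that each `p A_w* A_w p` is a nonnegative
multiple of `p`. -/
structure IsDarkProjection (a : I → Matrix (Fin d) (Fin d) ℂ) (p : Matrix (Fin d) (Fin d) ℂ) :
    Prop where
  isStarProjection : IsStarProjection p
  exists_eq_smul (w : List I) :
    ∃ l : ℝ, 0 ≤ l ∧ p * (wordMatrix a w)ᴴ * wordMatrix a w * p = (l : ℂ) • p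

lemma IsPerfectMeasurement.exists_isDarkProjection_of_normGain_eq_zero
    (ha : IsPerfectMeasurement a) (hX : X.PosSemidef) (h : ∀ n, normGain a n X = 0) :
    ∃ p, IsDarkProjection a p ∧ p.rank = X.rank := by
  obtain ⟨R, hR, hrank⟩ := exists_isStarProjection_mul_of_isHermitian hX.isHermitian
  refine ⟨X * R, ⟨hR, fun w => ?_⟩, hrank⟩
  have hconst (n : ℕ) : meanNorm a n X = ‖X‖ := by
    rw [← sub_eq_zero, ← meanNorm_zero a X, ← Finset.sum_range_sub (fun n => meanNorm a n X)]
    exact Finset.sum_eq_zero fun n _ => h n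
  obtain ⟨c, hc, hcX⟩ := (ha.wordMatrix_ofFn w.length).exists_eq_smul_of_sum_norm_le hX hR
    (hconst w.length).le w.get
  exact ⟨c, hc, by simpa only [List.ofFn_get, Complex.coe_smul] using hcX⟩

lemma IsPerfectMeasurement.tendsto_trace_pow (ha : IsPerfectMeasurement a)
    (hdark : ∀ p, IsDarkProjection a p → p.rank ≤ 1) {ρ : ℕ → Matrix (Fin d) (Fin d) ℂ}
    (hρ : ∀ n, ρ n ∈ densityMatrices ℂ (Fin d))
    (hgain : ∀ j, Tendsto (fun n => normGain a j (ρ n)) atTop (nhds 0)) {m : ℕ} (hm : m ≠ 0) :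
    Tendsto (fun n => (ρ n ^ m).trace) atTop (nhds 1) := by
  have : FirstCountableTopology (Matrix (Fin d) (Fin d) ℂ) :=
    inferInstanceAs (FirstCountableTopology (Fin d → Fin d → ℂ))
  refine tendsto_of_subseq_tendsto fun ns hns => ?_
  obtain ⟨ρ', ⟨hpos, htrace⟩, φ, hφ_mono, hφ⟩ :=
    isCompact_densityMatrices.tendsto_subseq fun n => hρ (ns n)
  have hgain_limit (j : ℕ) : normGain a j ρ' = 0 :=
    tendsto_nhds_unique (((continuous_normGain a j).tendsto ρ').comp hφ)
      ((hgain j).comp (hns.comp hφ_mono.tendsto_atTop))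
  obtain ⟨p, hp, hrank⟩ := ha.exists_isDarkProjection_of_normGain_eq_zero hpos hgain_limit
  have hlimit : (ρ' ^ m).trace = 1 :=
    trace_pow_eq_one_of_rank_le_one htrace (hrank ▸ hdark p hp) hm
  refine ⟨φ, ?_⟩
  rw [← hlimit]
  exact ((by fun_prop : Continuous fun ρ : Matrix (Fin d) (Fin d) ℂ => (ρ ^ m).trace).tendsto
    ρ').comp hφ

end Words

section Trajectories

lemma ae_tendsto_zero_of_tsum_lintegral_ne_top {Ω : Type*} [MeasurableSpace Ω] {μ : Measure Ω}
    {f : ℕ → Ω → ENNReal} (hf : ∀ n, AEMeasurable (f n) μ) (h : ∑' n, ∫⁻ ω, f n ω ∂μ ≠ ⊤) :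
    ∀ᵐ ω ∂μ, Tendsto (fun n => f n ω) atTop (nhds 0) := by
  rw [← lintegral_tsum hf] at h
  filter_upwards [ae_lt_top' (AEMeasurable.tsum hf) h] with ω hω
  exact ENNReal.tendsto_atTop_zero_of_tsum_ne_top hω.ne

lemma lintegral_comp_prefix {I : Type*} [Fintype I] [MeasurableSpace I]
    [MeasurableSingletonClass I] (P : Measure (ℕ → I)) {n : ℕ} (f : (Fin n → I) → ENNReal) :
    ∫⁻ ω, f (fun j => ω j) ∂P = ∑ w, f w * P {ω | ∀ j : Fin n, ω j = w j} := by
  have hprefix : Measurable fun (ω : ℕ → I) (j : Fin n) => ω j := by fun_prop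
  rw [← lintegral_map (.of_discrete : Measurable f) hprefix, lintegral_fintype]
  refine Finset.sum_congr rfl fun w _ => ?_
  rw [Measure.map_apply hprefix (measurableSet_singleton w)]
  simp only [Set.preimage, Set.mem_singleton_iff, funext_iff]

variable {d k : ℕ} {a : Fin k → Matrix (Fin d) (Fin d) ℂ} {θ₀ σ : Matrix (Fin d) (Fin d) ℂ}
  {P : Measure (ℕ → Fin k)}

lemma traj_eq_normalizedState (a : Fin k → Matrix (Fin d) (Fin d) ℂ)
    (θ₀ σ : Matrix (Fin d) (Fin d) ℂ) (n : ℕ) (ω : ℕ → Fin k) :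
    traj a θ₀ σ n ω = normalizedState σ (postState a θ₀ fun j : Fin n => ω j) :=
  rfl

lemma traj_mem_densityMatrices (hθ₀ : θ₀.PosSemidef) (hσ : σ ∈ densityMatrices ℂ (Fin d)) (n : ℕ)
    (ω : ℕ → Fin k) : traj a θ₀ σ n ω ∈ densityMatrices ℂ (Fin d) :=
  normalizedState_mem_densityMatrices hσ (postState_posSemidef a hθ₀ _)

lemma CylinderCondition.lintegral_normGain_traj (hP : CylinderCondition a θ₀ P)
    (ha : IsPerfectMeasurement a) (hθ₀ : θ₀.PosSemidef) (σ : Matrix (Fin d) (Fin d) ℂ)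
    (n j : ℕ) :
    ∫⁻ ω, ENNReal.ofReal (normGain a j (traj a θ₀ σ n ω)) ∂P =
      ENNReal.ofReal (normGain a (n + j) θ₀) := by
  have hpost (w : Fin n → Fin k) := postState_posSemidef a hθ₀ w
  simp only [traj_eq_normalizedState]
  rw [lintegral_comp_prefix P fun w => ENNReal.ofReal (normGain a j (normalizedState σ
    (postState a θ₀ w))), ← sum_normGain_postState,
    ENNReal.ofReal_sum_of_nonneg fun w _ => ha.normGain_nonneg (hpost w) j]
  refine Finset.sum_congr rfl fun w _ => ?_
  have hnonneg : 0 ≤ (postState a θ₀ w).trace.re := (RCLike.nonneg_iff.1 (hpost w).trace_nonneg).1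
  calc ENNReal.ofReal (normGain a j (normalizedState σ (postState a θ₀ w))) *
        P {ω | ∀ j : Fin n, ω j = w j}
      = ENNReal.ofReal ((postState a θ₀ w).trace.re *
          normGain a j (normalizedState σ (postState a θ₀ w))) := by
        rw [hP n w, mul_comm, ENNReal.ofReal_mul hnonneg]
        rfl
    _ = ENNReal.ofReal (normGain a j (postState a θ₀ w)) := by
        rw [← normGain_smul _ _ _ hnonneg]
        exact congrArg _ (congrArg _ (re_trace_smul_normalizedState σ (hpost w)))

lemma CylinderCondition.ae_tendsto_normGain_traj (hP : CylinderCondition a θ₀ P)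
    (ha : IsPerfectMeasurement a) (hθ₀ : θ₀.PosSemidef) (hσ : σ ∈ densityMatrices ℂ (Fin d))
    (j : ℕ) :
    ∀ᵐ ω ∂P, Tendsto (fun n => normGain a j (traj a θ₀ σ n ω)) atTop (nhds 0) := by
  have hmeas (n : ℕ) : Measurable fun ω => ENNReal.ofReal (normGain a j (traj a θ₀ σ n ω)) :=
    (Measurable.of_discrete (f := fun w : Fin n → Fin k =>
      ENNReal.ofReal (normGain a j (normalizedState σ (postState a θ₀ w))))).comp
      (by fun_prop : Measurable fun (ω : ℕ → Fin k) (j : Fin n) => ω j)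
  have hsum : ∑' n, ∫⁻ ω, ENNReal.ofReal (normGain a j (traj a θ₀ σ n ω)) ∂P ≠ ⊤ := by
    simp only [hP.lintegral_normGain_traj ha hθ₀ σ]
    exact ((summable_nat_add_iff j).2 (ha.summable_normGain hθ₀)).tsum_ofReal_ne_top
  filter_upwards [ae_tendsto_zero_of_tsum_lintegral_ne_top (fun n => (hmeas n).aemeasurable) hsum]
    with ω hω
  have hnonneg (n : ℕ) : 0 ≤ normGain a j (traj a θ₀ σ n ω) :=
    ha.normGain_nonneg (traj_mem_densityMatrices hθ₀ hσ n ω).1 j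
  simpa only [Function.comp_def, ENNReal.toReal_zero, ENNReal.toReal_ofReal (hnonneg _)] using
    (ENNReal.tendsto_toReal ENNReal.zero_ne_top).comp hω

end Trajectories

/-- Either the quantum trajectory purifies with probability 1, or there exists a dark
projection of rank at least two. -/
theorem purification_or_dark_projection {d k : ℕ}
    (a : Fin k → Matrix (Fin d) (Fin d) ℂ)
    (ha : ∑ i, (a i)ᴴ * a i = 1)
    (θ₀ : Matrix (Fin d) (Fin d) ℂ)
    (hθ₀ : θ₀.PosSemidef ∧ θ₀.trace = 1)
    (σ : Matrix (Fin d) (Fin d) ℂ)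
    (hσ : σ.PosSemidef ∧ σ.trace = 1)
    (P : Measure (ℕ → Fin k)) [IsProbabilityMeasure P]
    (hP : CylinderCondition a θ₀ P) :
    (∀ᵐ ω ∂P, ∀ m : ℕ, 1 ≤ m →
        Tendsto (fun n : ℕ => ((traj a θ₀ σ n ω) ^ m).trace) atTop (nhds 1)) ∨
    (∃ p : Matrix (Fin d) (Fin d) ℂ, p.IsHermitian ∧ p * p = p ∧ 2 ≤ p.rank ∧
        ∀ w : List (Fin k), ∃ l : ℝ, 0 ≤ l ∧
          p * (wordMatrix a w)ᴴ * wordMatrix a w * p = (l : ℂ) • p) := by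
  by_cases hdark : ∃ p, IsDarkProjection a p ∧ 2 ≤ p.rank
  · obtain ⟨p, hp, hrank⟩ := hdark
    exact Or.inr ⟨p, hp.isStarProjection.isSelfAdjoint, hp.isStarProjection.isIdempotentElem,
      hrank, hp.exists_eq_smul⟩
  · left
    have hrank (p) (hp : IsDarkProjection a p) : p.rank ≤ 1 := by
      by_contra! h
      exact hdark ⟨p, hp, h⟩
    have ha : IsPerfectMeasurement a := ha
    have hgain := ae_all_iff.2 (hP.ae_tendsto_normGain_traj ha hθ₀.1 hσ)
    filter_upwards [hgain] with ω hω m hm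
    exact ha.tendsto_trace_pow hrank (fun n => traj_mem_densityMatrices hθ₀.1 hσ n ω) hω
      (Nat.one_le_iff_ne_zero.1 hm)
end

section
/- Let (a_1,…,a_k) be a perfect measurement on the complex d×d matrices, let θ₀ be a density matrix, and let P be a probability measure on Ω = {1,…,k}^ℕ satisfying the cylinder condition for θ₀. Then at least one of the following alternatives holds: (i) for every m ∈ ℕ, lim_{n→∞} tr(Θ_n^m) = 1 P-almost surely; or (ii) there exists a density matrix ρ with tr(ρ²) < 1 (i.e. ρ is a mixed state) such that for every i = 1,…,k there exist λ_i ≥ 0 and a unitary d×d matrix u_i with a_i ρ a_i* = λ_i · u_i ρ u_i*. -/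
open Matrix MeasureTheory Filter
open scoped ComplexOrder

/-! Purity `tr θ²` does not decrease on average under a perfect measurement: with
`p_i = tr (a_i θ a_i*)`, its expected gain in one step is at least the defect
`∑ i, tr (((a_i* a_i - p_i) θ)²)`. Since purity is at most `1`, the expected defects along the
trajectory are summable, so almost surely the defect tends to `0`. If the defect of `θ = S S*`
vanishes, then `(a_i S)* (a_i S) = p_i S* S` for every `i`, so `a_i θ a_i* = (a_i S) (a_i S)*` has
the same characteristic polynomial as `p_i θ` and is unitarily conjugate to it. Thus, unless a mixed
state has this property, every limit point of the trajectory is a rank one projection, and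
compactness of the state space gives `tr Θ_n ^ m → 1`. -/

section Purity

variable {n 𝕜 : Type*} [Fintype n] [RCLike 𝕜]

theorem exists_unitary_conj_of_charpoly_eq [DecidableEq n] {A B : Matrix n n 𝕜}
    (hA : A.IsHermitian) (hB : B.IsHermitian) (h : A.charpoly = B.charpoly) :
    ∃ u ∈ unitaryGroup n 𝕜, A = u * B * uᴴ := by
  have heig : hA.eigenvalues = hB.eigenvalues := (hA.eigenvalues_eq_eigenvalues_iff hB).2 h
  refine ⟨_, (hA.eigenvectorUnitary * star hB.eigenvectorUnitary).2, ?_⟩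
  rw [← star_eq_conjTranspose, ← Unitary.conjStarAlgAut_apply (S := 𝕜),
    Unitary.conjStarAlgAut_mul_apply, hB.conjStarAlgAut_star_eigenvectorUnitary, ← heig]
  exact hA.spectral_theorem

theorem exists_unitary_conj_of_conjTranspose_mul_self_eq_smul [DecidableEq n]
    {X Y : Matrix n n 𝕜} {c : ℝ} (h : Xᴴ * X = (c : 𝕜) • (Yᴴ * Y)) :
    ∃ u ∈ unitaryGroup n 𝕜, X * Xᴴ = (c : 𝕜) • (u * (Y * Yᴴ) * uᴴ) := by
  have hcharpoly : (X * Xᴴ).charpoly = ((c : 𝕜) • (Y * Yᴴ)).charpoly := by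
    rw [charpoly_mul_comm, h, ← smul_mul_assoc, charpoly_mul_comm, mul_smul_comm]
  have hY : ((c : 𝕜) • (Y * Yᴴ)).IsHermitian := by
    simp [IsHermitian, conjTranspose_smul]
  obtain ⟨u, hu, hXY⟩ :=
    exists_unitary_conj_of_charpoly_eq (isHermitian_mul_conjTranspose_self X) hY hcharpoly
  exact ⟨u, hu, by rw [hXY, mul_smul_comm, smul_mul_assoc]⟩

theorem exists_eq_mul_conjTranspose_self {T : Matrix n n 𝕜} (hT : T.PosSemidef) :
    ∃ S : Matrix n n 𝕜, T = S * Sᴴ := by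
  classical
  open scoped MatrixOrder in
  obtain ⟨S, hS⟩ := CStarAlgebra.nonneg_iff_eq_star_mul_self.1 hT.nonneg
  exact ⟨Sᴴ, by rwa [conjTranspose_conjTranspose]⟩

theorem posSemidef_trace_smul_sub_mul_self {T : Matrix n n 𝕜} (hT : T.PosSemidef) :
    (T.trace • T - T * T).PosSemidef := by
  classical
  set φ := Unitary.conjStarAlgAut 𝕜 (Matrix n n 𝕜) hT.1.eigenvectorUnitary
  set x : n → 𝕜 := RCLike.ofReal ∘ hT.1.eigenvalues
  have hx : ∀ i, 0 ≤ x i := fun i => RCLike.ofReal_nonneg.2 (hT.eigenvalues_nonneg i)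
  have hφ : T.trace • T - T * T = φ (diagonal fun i => (∑ j, x j) * x i - x i * x i) := by
    have hdiag : diagonal (fun i => (∑ j, x j) * x i - x i * x i) =
        (∑ j, x j) • diagonal x - diagonal x * diagonal x := by
      rw [diagonal_mul_diagonal, ← diagonal_smul, diagonal_sub]
      rfl
    have htrace : T.trace = ∑ j, x j := hT.1.trace_eq_sum_eigenvalues
    rw [hdiag, map_sub, map_smul, map_mul, ← hT.1.spectral_theorem, htrace]
  rw [hφ, Unitary.conjStarAlgAut_apply]
  refine (PosSemidef.diagonal fun i => ?_).mul_mul_conjTranspose_same _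
  exact sub_nonneg.2 (mul_le_mul_of_nonneg_right
    (Finset.single_le_sum (fun j _ => hx j) (Finset.mem_univ i)) (hx i))

theorem trace_mul_self_le_sq {T : Matrix n n 𝕜} (hT : T.PosSemidef) :
    (T * T).trace ≤ T.trace ^ 2 := by
  have h := (posSemidef_trace_smul_sub_mul_self hT).trace_nonneg
  rwa [trace_sub, trace_smul, smul_eq_mul, ← sq, sub_nonneg] at h

theorem mul_self_eq_trace_smul_of_sq_le_trace {T : Matrix n n 𝕜} (hT : T.PosSemidef)
    (h : T.trace ^ 2 ≤ (T * T).trace) : T * T = T.trace • T := by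
  have hzero : (T.trace • T - T * T).trace = 0 := by
    rw [trace_sub, trace_smul, smul_eq_mul, ← sq, h.antisymm (trace_mul_self_le_sq hT), sub_self]
  exact (sub_eq_zero.1
    ((posSemidef_trace_smul_sub_mul_self hT).trace_eq_zero_iff.1 hzero)).symm

theorem norm_apply_sq_le_re_trace_conjTranspose_mul_self (T : Matrix n n 𝕜) (i j : n) :
    ‖T i j‖ ^ 2 ≤ RCLike.re (Tᴴ * T).trace := by
  have hdiag : ‖T i j‖ ^ 2 ≤ RCLike.re ((Tᴴ * T) j j) := by
    simp only [mul_apply, conjTranspose_apply, RCLike.star_def, RCLike.conj_mul, map_sum]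
    norm_cast
    exact Finset.single_le_sum (f := fun k => ‖T k j‖ ^ 2) (fun k _ => sq_nonneg _)
      (Finset.mem_univ i)
  refine hdiag.trans ?_
  rw [trace, map_sum]
  exact Finset.single_le_sum (f := fun k => RCLike.re ((Tᴴ * T) k k))
    (fun k _ => (RCLike.nonneg_iff.1 (posSemidef_conjTranspose_mul_self T).diag_nonneg).1)
    (Finset.mem_univ j)

theorem trace_mul_mul_mul_conjTranspose_self {B : Matrix n n 𝕜} (hB : B.IsHermitian)
    (S : Matrix n n 𝕜) :
    (B * (S * Sᴴ) * B * (S * Sᴴ)).trace = ((Sᴴ * B * S)ᴴ * (Sᴴ * B * S)).trace := by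
  rw [← mul_assoc (_ * B) S, trace_mul_comm]
  simp only [conjTranspose_mul, conjTranspose_conjTranspose, hB.eq, mul_assoc]

theorem trace_mul_mul_mul_nonneg {B T : Matrix n n 𝕜} (hB : B.IsHermitian) (hT : T.PosSemidef) :
    0 ≤ (B * T * B * T).trace := by
  obtain ⟨S, rfl⟩ := exists_eq_mul_conjTranspose_self hT
  rw [trace_mul_mul_mul_conjTranspose_self hB]
  exact (posSemidef_conjTranspose_mul_self _).trace_nonneg

theorem mul_eq_zero_of_mul_mul_conjTranspose_eq_zero {a T : Matrix n n 𝕜} (hT : T.PosSemidef)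
    (h : a * T * aᴴ = 0) : a * T = 0 := by
  obtain ⟨S, rfl⟩ := exists_eq_mul_conjTranspose_self hT
  have haS : a * S = 0 := by
    rw [← self_mul_conjTranspose_eq_zero, ← h]
    simp only [conjTranspose_mul, mul_assoc]
  rw [← mul_assoc, haS, zero_mul]

end Purity

section DensityMatrix

variable {n : Type*} [Fintype n]

/-- Density matrices, the states of the matrix algebra. -/
def IsDensityMatrix (θ : Matrix n n ℂ) : Prop :=
  θ.PosSemidef ∧ θ.trace = 1

/-- The purity `tr θ²` of a state. Only the real part is recorded, the trace being real for
Hermitian `θ`. -/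
noncomputable def purity (θ : Matrix n n ℂ) : ℝ :=
  (θ * θ).trace.re

theorem purity_nonneg {θ : Matrix n n ℂ} (hθ : θ.PosSemidef) : 0 ≤ purity θ := by
  have h := (posSemidef_conjTranspose_mul_self θ).trace_nonneg
  rw [hθ.1.eq] at h
  exact (Complex.nonneg_iff.1 h).1

theorem IsDensityMatrix.purity_le_one {θ : Matrix n n ℂ} (hθ : IsDensityMatrix θ) :
    purity θ ≤ 1 := by
  have h := trace_mul_self_le_sq hθ.1
  rw [hθ.2, one_pow] at h
  exact (Complex.le_def.1 h).1

theorem IsDensityMatrix.isIdempotentElem_of_one_le_purity {θ : Matrix n n ℂ}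
    (hθ : IsDensityMatrix θ) (h : 1 ≤ purity θ) : IsIdempotentElem θ := by
  have htrace := trace_mul_self_le_sq hθ.1
  rw [hθ.2, one_pow] at htrace
  have hsq : θ.trace ^ 2 ≤ (θ * θ).trace := by
    rw [hθ.2, one_pow]
    exact Complex.le_def.2 ⟨h, (Complex.le_def.1 htrace).2.symm⟩
  have hidem := mul_self_eq_trace_smul_of_sq_le_trace hθ.1 hsq
  rwa [hθ.2, one_smul] at hidem

theorem isClosed_setOf_isDensityMatrix : IsClosed {θ : Matrix n n ℂ | IsDensityMatrix θ} := by
  have hinter : {θ : Matrix n n ℂ | IsDensityMatrix θ} =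
      ({θ | θᴴ = θ} ∩ ⋂ x : n → ℂ, {θ | 0 ≤ star x ⬝ᵥ θ *ᵥ x}) ∩ {θ | θ.trace = 1} := by
    ext θ
    simp [IsDensityMatrix, posSemidef_iff_dotProduct_mulVec, IsHermitian]
  rw [hinter]
  exact ((isClosed_eq (by fun_prop) (by fun_prop)).inter
    (isClosed_iInter fun x => isClosed_le (by fun_prop) (by fun_prop))).inter
    (isClosed_eq (by fun_prop) (by fun_prop))

theorem isCompact_setOf_isDensityMatrix : IsCompact {θ : Matrix n n ℂ | IsDensityMatrix θ} := by
  have hbox : IsCompact (Set.univ.pi fun _ : n => Set.univ.pi fun _ : n =>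
      Metric.closedBall (0 : ℂ) 1) :=
    isCompact_univ_pi fun _ => isCompact_univ_pi fun _ => isCompact_closedBall _ _
  refine hbox.of_isClosed_subset isClosed_setOf_isDensityMatrix fun θ hθ i _ j _ => ?_
  have hentry : ‖θ i j‖ ^ 2 ≤ purity θ := by
    have h := norm_apply_sq_le_re_trace_conjTranspose_mul_self θ i j
    rwa [hθ.1.1.eq] at h
  rw [mem_closedBall_zero_iff, ← sq_le_one_iff₀ (norm_nonneg _)]
  exact hentry.trans hθ.purity_le_one

/-- The state obtained from a positive semidefinite matrix by dividing by its trace, with the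
default `σ` when the trace vanishes. -/
noncomputable def normalizeTrace (σ T : Matrix n n ℂ) : Matrix n n ℂ :=
  if T.trace ≠ 0 then T.trace⁻¹ • T else σ

theorem isDensityMatrix_normalizeTrace {σ T : Matrix n n ℂ} (hσ : IsDensityMatrix σ)
    (hT : T.PosSemidef) : IsDensityMatrix (normalizeTrace σ T) := by
  unfold normalizeTrace
  split_ifs with htrace
  · exact ⟨hT.smul (inv_nonneg.2 hT.trace_nonneg),
      by rw [trace_smul, smul_eq_mul, inv_mul_cancel₀ htrace]⟩
  · exact hσ

theorem trace_smul_normalizeTrace (σ : Matrix n n ℂ) {T : Matrix n n ℂ} (hT : T.PosSemidef) :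
    T.trace • normalizeTrace σ T = T := by
  unfold normalizeTrace
  split_ifs with htrace
  · rw [smul_inv_smul₀ htrace]
  · rw [hT.trace_eq_zero_iff.1 (not_not.1 htrace), trace_zero, zero_smul]

theorem normalizeTrace_smul (σ T : Matrix n n ℂ) {c : ℂ} (hc : c ≠ 0) :
    normalizeTrace σ (c • T) = normalizeTrace σ T := by
  have hinv : (c * T.trace)⁻¹ * c = T.trace⁻¹ := by
    rw [mul_inv, mul_right_comm, inv_mul_cancel₀ hc, one_mul]
  simp only [normalizeTrace, trace_smul, smul_eq_mul, mul_ne_zero_iff, hc, ne_eq,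
    not_false_eq_true, true_and, smul_smul, hinv]

theorem re_trace_nonneg {T : Matrix n n ℂ} (hT : T.PosSemidef) : 0 ≤ T.trace.re :=
  (Complex.nonneg_iff.1 hT.trace_nonneg).1

theorem ofReal_re_trace {T : Matrix n n ℂ} (hT : T.PosSemidef) : (T.trace.re : ℂ) = T.trace :=
  (Complex.eq_re_of_ofReal_le (Complex.ofReal_zero ▸ hT.trace_nonneg)).symm

theorem purity_ofReal_smul (c : ℝ) (T : Matrix n n ℂ) :
    purity ((c : ℂ) • T) = c ^ 2 * purity T := by
  simp only [purity, smul_mul_smul_comm, trace_smul, smul_eq_mul, ← Complex.ofReal_mul,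
    Complex.re_ofReal_mul, sq]

end DensityMatrix

section Measurement

variable {n ι : Type*} [Fintype n] [Fintype ι]

/-- The probability `tr (a θ a*)` of the outcome with Kraus operator `a` in the state `θ`. -/
noncomputable def outcomeProb (a θ : Matrix n n ℂ) : ℝ :=
  (a * θ * aᴴ).trace.re

theorem outcomeProb_nonneg (a : Matrix n n ℂ) {θ : Matrix n n ℂ} (hθ : θ.PosSemidef) :
    0 ≤ outcomeProb a θ :=
  re_trace_nonneg (hθ.mul_mul_conjTranspose_same a)

theorem purity_conj_eq (σ a : Matrix n n ℂ) {θ : Matrix n n ℂ} (hθ : θ.PosSemidef) :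
    purity (a * θ * aᴴ) =
      outcomeProb a θ ^ 2 * purity (normalizeTrace σ (a * θ * aᴴ)) := by
  have hT := hθ.mul_mul_conjTranspose_same a
  rw [outcomeProb, ← purity_ofReal_smul, ofReal_re_trace hT, trace_smul_normalizeTrace σ hT]

theorem outcomeProb_mul_self_eq_zero {a θ : Matrix n n ℂ} (hθ : θ.PosSemidef)
    (h : outcomeProb a θ = 0) : outcomeProb a (θ * θ) = 0 := by
  have hT := hθ.mul_mul_conjTranspose_same a
  have hzero : a * θ * aᴴ = 0 := hT.trace_eq_zero_iff.1 (by
    rw [← ofReal_re_trace hT]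
    exact congrArg Complex.ofReal h)
  rw [outcomeProb, ← mul_assoc, mul_eq_zero_of_mul_mul_conjTranspose_eq_zero hθ hzero]
  simp

theorem ofReal_outcomeProb_mul_comp_normalizeTrace (σ a : Matrix n n ℂ) {T : Matrix n n ℂ}
    (hT : T.PosSemidef) (f : Matrix n n ℂ → ENNReal) :
    ENNReal.ofReal (outcomeProb a T) * f (normalizeTrace σ (a * T * aᴴ)) =
      ENNReal.ofReal T.trace.re * (ENNReal.ofReal (outcomeProb a (normalizeTrace σ T)) *
        f (normalizeTrace σ (a * normalizeTrace σ T * aᴴ))) := by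
  rcases eq_or_ne T.trace 0 with hzero | htrace
  · simp [hT.trace_eq_zero_iff.1 hzero, outcomeProb]
  have hconj : a * T * aᴴ = T.trace • (a * normalizeTrace σ T * aᴴ) := by
    rw [← smul_mul_assoc, ← mul_smul_comm, trace_smul_normalizeTrace σ hT]
  have hprob : outcomeProb a T = T.trace.re * outcomeProb a (normalizeTrace σ T) := by
    rw [outcomeProb, outcomeProb, hconj, trace_smul, smul_eq_mul, ← Complex.re_ofReal_mul,
      ofReal_re_trace hT]
  rw [hprob, ENNReal.ofReal_mul (re_trace_nonneg hT), mul_assoc, hconj,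
    normalizeTrace_smul σ _ htrace]

variable [DecidableEq n]

theorem sum_outcomeProb {a : ι → Matrix n n ℂ} (ha : ∑ i, (a i)ᴴ * a i = 1)
    (T : Matrix n n ℂ) : ∑ i, outcomeProb (a i) T = T.trace.re := by
  simp only [outcomeProb, trace_mul_cycle (a _) T]
  rw [← Complex.re_sum, ← trace_sum, ← Finset.sum_mul, ha, one_mul]

/-- For `p = tr (a θ a*)`, the quantity `tr (((a* a - p) θ)²)`. It is the squared Hilbert–Schmidt
norm of `S* (a* a - p) S` for `θ = S S*`, and measures how far `a θ a*` is from being a multiple of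
a unitary conjugate of `θ`. -/
noncomputable def conjugationDefect (a θ : Matrix n n ℂ) : ℝ :=
  ((aᴴ * a - (outcomeProb a θ : ℂ) • 1) * θ * (aᴴ * a - (outcomeProb a θ : ℂ) • 1) * θ).trace.re

theorem isHermitian_conjTranspose_mul_self_sub_ofReal_smul_one (a : Matrix n n ℂ) (c : ℝ) :
    (aᴴ * a - (c : ℂ) • 1).IsHermitian := by
  simp [IsHermitian, conjTranspose_smul]

theorem conjugationDefect_nonneg (a : Matrix n n ℂ) {θ : Matrix n n ℂ} (hθ : θ.PosSemidef) :
    0 ≤ conjugationDefect a θ :=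
  (Complex.nonneg_iff.1 (trace_mul_mul_mul_nonneg
    (isHermitian_conjTranspose_mul_self_sub_ofReal_smul_one a _) hθ)).1

theorem continuous_conjugationDefect (a : Matrix n n ℂ) : Continuous (conjugationDefect a) := by
  unfold conjugationDefect outcomeProb
  fun_prop

theorem exists_unitary_conj_of_conjugationDefect_eq_zero {a θ : Matrix n n ℂ}
    (hθ : θ.PosSemidef) (h : conjugationDefect a θ = 0) :
    ∃ u ∈ unitaryGroup n ℂ, a * θ * aᴴ = (outcomeProb a θ : ℂ) • (u * θ * uᴴ) := by
  have hB := isHermitian_conjTranspose_mul_self_sub_ofReal_smul_one a (outcomeProb a θ)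
  have htrace : ((aᴴ * a - (outcomeProb a θ : ℂ) • 1) * θ *
      (aᴴ * a - (outcomeProb a θ : ℂ) • 1) * θ).trace = 0 :=
    Complex.ext h (Complex.nonneg_iff.1 (trace_mul_mul_mul_nonneg hB hθ)).2.symm
  generalize outcomeProb a θ = p at *
  obtain ⟨S, rfl⟩ := exists_eq_mul_conjTranspose_self hθ
  rw [trace_mul_mul_mul_conjTranspose_self hB, trace_conjTranspose_mul_self_eq_zero_iff,
    mul_sub, sub_mul, sub_eq_zero] at htrace
  have hgram : (a * S)ᴴ * (a * S) = (p : ℂ) • (Sᴴ * S) := by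
    simpa only [conjTranspose_mul, mul_assoc, mul_smul_comm, smul_mul_assoc, one_mul]
      using htrace
  have haS : a * (S * Sᴴ) * aᴴ = a * S * (a * S)ᴴ := by
    simp only [conjTranspose_mul, mul_assoc]
  rw [haS]
  exact exists_unitary_conj_of_conjTranspose_mul_self_eq_smul hgram

theorem conjugationDefect_eq (a θ : Matrix n n ℂ) :
    conjugationDefect a θ = purity (a * θ * aᴴ) - 2 * outcomeProb a θ * outcomeProb a (θ * θ) +
      outcomeProb a θ ^ 2 * purity θ := by
  have hpurity : (a * θ * aᴴ * (a * θ * aᴴ)).trace = (aᴴ * a * θ * (aᴴ * a) * θ).trace := by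
    rw [← mul_assoc, trace_mul_comm]
    simp only [mul_assoc]
  have hcross : (a * (θ * θ) * aᴴ).trace = (θ * (aᴴ * a) * θ).trace := by
    rw [trace_mul_cycle, trace_mul_cycle θ, trace_mul_comm]
  have hcross_comm : (aᴴ * a * θ * θ).trace = (θ * (aᴴ * a) * θ).trace := by
    rw [trace_mul_cycle θ, mul_assoc, trace_mul_comm]
  unfold conjugationDefect purity
  generalize outcomeProb a θ = p
  rw [outcomeProb, hpurity, hcross]
  simp only [sub_mul, mul_sub, smul_mul_assoc, mul_smul_comm, one_mul, mul_one, trace_sub,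
    trace_smul, smul_eq_mul, hcross_comm, Complex.sub_re, Complex.re_ofReal_mul]
  ring

theorem conjugationDefect_le (σ : Matrix n n ℂ) {a θ : Matrix n n ℂ} (hθ : θ.PosSemidef)
    (hp : outcomeProb a θ ≤ 1) :
    conjugationDefect a θ ≤ outcomeProb a θ * purity (normalizeTrace σ (a * θ * aᴴ)) -
      2 * outcomeProb a (θ * θ) + outcomeProb a θ * purity θ := by
  have hnonneg := conjugationDefect_nonneg a hθ
  have heq := conjugationDefect_eq a θ
  rw [purity_conj_eq σ a hθ] at heq
  rcases (outcomeProb_nonneg a hθ).eq_or_lt with hzero | hpos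
  · simp [heq, ← hzero, outcomeProb_mul_self_eq_zero hθ hzero.symm]
  · set gain := outcomeProb a θ * purity (normalizeTrace σ (a * θ * aᴴ)) -
      2 * outcomeProb a (θ * θ) + outcomeProb a θ * purity θ with hgain
    have hmul : conjugationDefect a θ = outcomeProb a θ * gain := by rw [heq, hgain]; ring
    have hgain_nonneg : 0 ≤ gain := nonneg_of_mul_nonneg_right (hmul ▸ hnonneg) hpos
    exact hmul.trans_le (mul_le_of_le_one_left hgain_nonneg hp)

theorem purity_add_sum_conjugationDefect_le {a : ι → Matrix n n ℂ}
    (ha : ∑ i, (a i)ᴴ * a i = 1) (σ : Matrix n n ℂ) {θ : Matrix n n ℂ}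
    (hθ : IsDensityMatrix θ) :
    purity θ + ∑ i, conjugationDefect (a i) θ ≤
      ∑ i, outcomeProb (a i) θ * purity (normalizeTrace σ (a i * θ * (a i)ᴴ)) := by
  have hsum : ∑ i, outcomeProb (a i) θ = 1 := by
    rw [sum_outcomeProb ha, hθ.2, Complex.one_re]
  have hle_one : ∀ i, outcomeProb (a i) θ ≤ 1 := fun i =>
    hsum ▸ Finset.single_le_sum (fun j _ => outcomeProb_nonneg (a j) hθ.1) (Finset.mem_univ i)
  have hdefect := Finset.sum_le_sum fun i (_ : i ∈ Finset.univ) =>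
    conjugationDefect_le σ hθ.1 (hle_one i)
  rw [Finset.sum_add_distrib, Finset.sum_sub_distrib, ← Finset.mul_sum, ← Finset.sum_mul, hsum,
    sum_outcomeProb ha, one_mul] at hdefect
  change _ ≤ _ - 2 * purity θ + purity θ at hdefect
  linarith

end Measurement

section Convergence

open scoped ENNReal Topology

theorem ae_tendsto_zero_of_lintegral_add_le {Ω : Type*} [MeasurableSpace Ω] {μ : Measure Ω}
    {f g : ℕ → Ω → ℝ≥0∞} {C : ℝ≥0∞} (hg : ∀ n, AEMeasurable (g n) μ)
    (hstep : ∀ n, ∫⁻ ω, f n ω ∂μ + ∫⁻ ω, g n ω ∂μ ≤ ∫⁻ ω, f (n + 1) ω ∂μ)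
    (hC : C ≠ ∞) (hf : ∀ n, ∫⁻ ω, f n ω ∂μ ≤ C) :
    ∀ᵐ ω ∂μ, Tendsto (fun n => g n ω) atTop (𝓝 0) := by
  have hpartial : ∀ N, ∑ n ∈ Finset.range N, ∫⁻ ω, g n ω ∂μ ≤ ∫⁻ ω, f N ω ∂μ := by
    intro N
    induction N with
    | zero => simp
    | succ N ih =>
      rw [Finset.sum_range_succ]
      exact (add_le_add_left ih _).trans (hstep N)
  have hfinite : ∫⁻ ω, ∑' n, g n ω ∂μ ≠ ∞ := by
    rw [lintegral_tsum hg, ENNReal.tsum_eq_iSup_nat]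
    exact ne_top_of_le_ne_top hC (iSup_le fun N => (hpartial N).trans (hf N))
  filter_upwards [ae_lt_top' (AEMeasurable.tsum hg) hfinite] with ω hω
  exact ENNReal.tendsto_atTop_zero_of_tsum_ne_top hω.ne

theorem tendsto_comp_of_isCompact_of_tendsto {α X Y Z : Type*} [TopologicalSpace X]
    [TopologicalSpace Y] [T2Space Y] [TopologicalSpace Z] {K : Set X} (hK : IsCompact K)
    {g : X → Y} (hg : Continuous g) {F : X → Z} (hF : Continuous F) {y : Y} {z : Z}
    (hFz : ∀ ρ ∈ K, g ρ = y → F ρ = z) {l : Filter α} {x : α → X} (hx : ∀ t, x t ∈ K)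
    (hgx : Tendsto (fun t => g (x t)) l (𝓝 y)) : Tendsto (fun t => F (x t)) l (𝓝 z) := by
  rw [tendsto_iff_ultrafilter]
  intro 𝒰 h𝒰
  obtain ⟨ρ, hρK, hρ⟩ := isCompact_iff_ultrafilter_le_nhds'.1 hK (𝒰.map x)
    (Ultrafilter.mem_map.2 (univ_mem' hx))
  have hlim : Tendsto x 𝒰 (𝓝 ρ) := hρ
  have hgρ : g ρ = y := tendsto_nhds_unique ((hg.tendsto ρ).comp hlim) (hgx.mono_left h𝒰)
  exact hFz ρ hρK hgρ ▸ (hF.tendsto ρ).comp hlim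

end Convergence

section Trajectory

variable {d k : ℕ}

/-- The unnormalized state `A_w θ₀ A_w*` after the outcomes `w`; its trace is the probability
of `w`. -/
noncomputable def wordState (a : Fin k → Matrix (Fin d) (Fin d) ℂ)
    (θ₀ : Matrix (Fin d) (Fin d) ℂ) {m : ℕ} (w : Fin m → Fin k) : Matrix (Fin d) (Fin d) ℂ :=
  wordMatrix a (List.ofFn w) * θ₀ * (wordMatrix a (List.ofFn w))ᴴ

theorem wordState_snoc (a : Fin k → Matrix (Fin d) (Fin d) ℂ)
    (θ₀ : Matrix (Fin d) (Fin d) ℂ) {m : ℕ} (w : Fin m → Fin k) (i : Fin k) :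
    wordState a θ₀ (Fin.snoc w i : Fin (m + 1) → Fin k) = a i * wordState a θ₀ w * (a i)ᴴ := by
  have hword : wordMatrix a (List.ofFn (Fin.snoc w i : Fin (m + 1) → Fin k)) =
      a i * wordMatrix a (List.ofFn w) := by
    rw [List.ofFn_succ']
    simp [wordMatrix]
  simp only [wordState, hword, conjTranspose_mul, mul_assoc]

theorem posSemidef_wordState (a : Fin k → Matrix (Fin d) (Fin d) ℂ)
    {θ₀ : Matrix (Fin d) (Fin d) ℂ} (hθ₀ : θ₀.PosSemidef) {m : ℕ} (w : Fin m → Fin k) :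
    (wordState a θ₀ w).PosSemidef :=
  hθ₀.mul_mul_conjTranspose_same _

theorem traj_eq_normalizeTrace_wordState (a : Fin k → Matrix (Fin d) (Fin d) ℂ)
    (θ₀ σ : Matrix (Fin d) (Fin d) ℂ) (m : ℕ) (ω : ℕ → Fin k) :
    traj a θ₀ σ m ω = normalizeTrace σ (wordState a θ₀ fun j : Fin m => ω j) :=
  rfl

theorem isDensityMatrix_traj (a : Fin k → Matrix (Fin d) (Fin d) ℂ)
    {θ₀ σ : Matrix (Fin d) (Fin d) ℂ} (hθ₀ : θ₀.PosSemidef) (hσ : IsDensityMatrix σ)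
    (m : ℕ) (ω : ℕ → Fin k) : IsDensityMatrix (traj a θ₀ σ m ω) :=
  isDensityMatrix_normalizeTrace hσ (posSemidef_wordState a hθ₀ _)

theorem measurable_comp_traj {β : Type*} [MeasurableSpace β]
    (a : Fin k → Matrix (Fin d) (Fin d) ℂ) (θ₀ σ : Matrix (Fin d) (Fin d) ℂ) (m : ℕ)
    (f : Matrix (Fin d) (Fin d) ℂ → β) : Measurable fun ω => f (traj a θ₀ σ m ω) :=
  (measurable_of_finite fun w : Fin m → Fin k => f (normalizeTrace σ (wordState a θ₀ w))).comp
    (g := fun w => _) (by fun_prop : Measurable fun (ω : ℕ → Fin k) (j : Fin m) => ω j)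

theorem lintegral_comp_traj {a : Fin k → Matrix (Fin d) (Fin d) ℂ}
    {θ₀ : Matrix (Fin d) (Fin d) ℂ} {P : Measure (ℕ → Fin k)} (hP : CylinderCondition a θ₀ P)
    (σ : Matrix (Fin d) (Fin d) ℂ) (m : ℕ) (f : Matrix (Fin d) (Fin d) ℂ → ENNReal) :
    ∫⁻ ω, f (traj a θ₀ σ m ω) ∂P = ∑ w : Fin m → Fin k,
      ENNReal.ofReal (wordState a θ₀ w).trace.re * f (normalizeTrace σ (wordState a θ₀ w)) := by
  have hprefix : Measurable fun (ω : ℕ → Fin k) (j : Fin m) => ω j := by fun_prop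
  simp only [traj_eq_normalizeTrace_wordState]
  rw [← lintegral_map (f := fun w => f (normalizeTrace σ (wordState a θ₀ w)))
    (measurable_of_finite _) hprefix, lintegral_fintype]
  refine Finset.sum_congr rfl fun w _ => ?_
  rw [mul_comm, Measure.map_apply hprefix (measurableSet_singleton w), wordState, ← hP m w]
  congr 2
  ext ω
  exact funext_iff

theorem lintegral_comp_traj_succ {a : Fin k → Matrix (Fin d) (Fin d) ℂ}
    {θ₀ : Matrix (Fin d) (Fin d) ℂ} (hθ₀ : θ₀.PosSemidef) {P : Measure (ℕ → Fin k)}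
    (hP : CylinderCondition a θ₀ P) (σ : Matrix (Fin d) (Fin d) ℂ) (m : ℕ)
    (f : Matrix (Fin d) (Fin d) ℂ → ENNReal) :
    ∫⁻ ω, f (traj a θ₀ σ (m + 1) ω) ∂P =
      ∫⁻ ω, ∑ i, ENNReal.ofReal (outcomeProb (a i) (traj a θ₀ σ m ω)) *
        f (normalizeTrace σ (a i * traj a θ₀ σ m ω * (a i)ᴴ)) ∂P := by
  rw [lintegral_comp_traj hP, lintegral_comp_traj hP σ m fun θ =>
      ∑ i, ENNReal.ofReal (outcomeProb (a i) θ) * f (normalizeTrace σ (a i * θ * (a i)ᴴ)),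
    ← (Fin.snocEquiv fun _ : Fin (m + 1) => Fin k).sum_comp, Fintype.sum_prod_type_right]
  refine Finset.sum_congr rfl fun w _ => ?_
  rw [Finset.mul_sum]
  refine Finset.sum_congr rfl fun i _ => ?_
  change ENNReal.ofReal (wordState a θ₀ (Fin.snoc w i : Fin (m + 1) → Fin k)).trace.re *
    f (normalizeTrace σ (wordState a θ₀ (Fin.snoc w i : Fin (m + 1) → Fin k))) = _
  rw [wordState_snoc]
  exact ofReal_outcomeProb_mul_comp_normalizeTrace σ (a i) (posSemidef_wordState a hθ₀ w) f

theorem lintegral_purity_traj_add_lintegral_conjugationDefect_le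
    {a : Fin k → Matrix (Fin d) (Fin d) ℂ} (ha : ∑ i, (a i)ᴴ * a i = 1)
    {θ₀ σ : Matrix (Fin d) (Fin d) ℂ} (hθ₀ : θ₀.PosSemidef) (hσ : IsDensityMatrix σ)
    {P : Measure (ℕ → Fin k)} (hP : CylinderCondition a θ₀ P) (m : ℕ) :
    ∫⁻ ω, ENNReal.ofReal (purity (traj a θ₀ σ m ω)) ∂P +
        ∫⁻ ω, ENNReal.ofReal (∑ i, conjugationDefect (a i) (traj a θ₀ σ m ω)) ∂P ≤
      ∫⁻ ω, ENNReal.ofReal (purity (traj a θ₀ σ (m + 1) ω)) ∂P := by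
  rw [lintegral_comp_traj_succ hθ₀ hP σ m fun θ => ENNReal.ofReal (purity θ),
    ← lintegral_add_left (measurable_comp_traj a θ₀ σ m fun θ => ENNReal.ofReal (purity θ))]
  refine lintegral_mono fun ω => ?_
  have hΘ := isDensityMatrix_traj a hθ₀ hσ m ω
  have hdefect := Finset.sum_nonneg fun i (_ : i ∈ Finset.univ) =>
    conjugationDefect_nonneg (a i) hΘ.1
  have hprob := fun i => outcomeProb_nonneg (a i) hΘ.1
  have hpurity := fun i => purity_nonneg
    (isDensityMatrix_normalizeTrace hσ (hΘ.1.mul_mul_conjTranspose_same (a i))).1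
  simp only [← ENNReal.ofReal_mul (hprob _)]
  rw [← ENNReal.ofReal_add (purity_nonneg hΘ.1) hdefect,
    ← ENNReal.ofReal_sum_of_nonneg fun i _ => mul_nonneg (hprob i) (hpurity i)]
  exact ENNReal.ofReal_le_ofReal (purity_add_sum_conjugationDefect_le ha σ hΘ)

theorem ae_tendsto_sum_conjugationDefect_traj
    {a : Fin k → Matrix (Fin d) (Fin d) ℂ} (ha : ∑ i, (a i)ᴴ * a i = 1)
    {θ₀ σ : Matrix (Fin d) (Fin d) ℂ} (hθ₀ : θ₀.PosSemidef) (hσ : IsDensityMatrix σ)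
    {P : Measure (ℕ → Fin k)} [IsFiniteMeasure P] (hP : CylinderCondition a θ₀ P) :
    ∀ᵐ ω ∂P, Tendsto (fun m => ∑ i, conjugationDefect (a i) (traj a θ₀ σ m ω)) atTop
      (nhds 0) := by
  have hpurity : ∀ m, ∫⁻ ω, ENNReal.ofReal (purity (traj a θ₀ σ m ω)) ∂P ≤ P Set.univ :=
    fun m => (lintegral_mono fun ω => ENNReal.ofReal_le_one.2
      (isDensityMatrix_traj a hθ₀ hσ m ω).purity_le_one).trans_eq lintegral_one
  filter_upwards [ae_tendsto_zero_of_lintegral_add_le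
    (fun m => (measurable_comp_traj a θ₀ σ m fun θ =>
      ENNReal.ofReal (∑ i, conjugationDefect (a i) θ)).aemeasurable)
    (lintegral_purity_traj_add_lintegral_conjugationDefect_le ha hθ₀ hσ hP)
    (measure_ne_top P Set.univ) hpurity] with ω hω
  have htoReal := (ENNReal.tendsto_toReal ENNReal.zero_ne_top).comp hω
  refine htoReal.congr fun m => ENNReal.toReal_ofReal ?_
  exact Finset.sum_nonneg fun i _ =>
    conjugationDefect_nonneg (a i) (isDensityMatrix_traj a hθ₀ hσ m ω).1

end Trajectory

/-- Either the quantum trajectory purifies with probability 1, or there exists a mixed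
state `ρ` such that each `a_i ρ a_i*` is a nonnegative multiple of a unitary conjugate
of `ρ`. -/
theorem purification_or_invariant_mixed_state {d k : ℕ}
    (a : Fin k → Matrix (Fin d) (Fin d) ℂ)
    (ha : ∑ i, (a i)ᴴ * a i = 1)
    (θ₀ : Matrix (Fin d) (Fin d) ℂ)
    (hθ₀ : θ₀.PosSemidef ∧ θ₀.trace = 1)
    (σ : Matrix (Fin d) (Fin d) ℂ)
    (hσ : σ.PosSemidef ∧ σ.trace = 1)
    (P : Measure (ℕ → Fin k)) [IsProbabilityMeasure P]
    (hP : CylinderCondition a θ₀ P) :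
    (∀ᵐ ω ∂P, ∀ m : ℕ, 1 ≤ m →
        Tendsto (fun n : ℕ => ((traj a θ₀ σ n ω) ^ m).trace) atTop (nhds 1)) ∨
    (∃ ρ : Matrix (Fin d) (Fin d) ℂ, ρ.PosSemidef ∧ ρ.trace = 1 ∧
        (ρ * ρ).trace.re < 1 ∧
        ∀ i : Fin k, ∃ l : ℝ, 0 ≤ l ∧ ∃ u : Matrix (Fin d) (Fin d) ℂ,
          u ∈ Matrix.unitaryGroup (Fin d) ℂ ∧
          a i * ρ * (a i)ᴴ = (l : ℂ) • (u * ρ * uᴴ)) := by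
  refine or_iff_not_imp_right.2 fun hmixed => ?_
  have hpure : ∀ ρ, IsDensityMatrix ρ → ∑ i, conjugationDefect (a i) ρ = 0 →
      IsIdempotentElem ρ := by
    intro ρ hρ hdefect
    rw [Finset.sum_eq_zero_iff_of_nonneg fun i _ => conjugationDefect_nonneg (a i) hρ.1]
      at hdefect
    refine hρ.isIdempotentElem_of_one_le_purity (not_lt.1 fun hlt => hmixed ?_)
    exact ⟨ρ, hρ.1, hρ.2, hlt, fun i => ⟨outcomeProb (a i) ρ, outcomeProb_nonneg (a i) hρ.1,
      exists_unitary_conj_of_conjugationDefect_eq_zero hρ.1 (hdefect i (Finset.mem_univ i))⟩⟩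
  filter_upwards [ae_tendsto_sum_conjugationDefect_traj ha hθ₀.1 hσ hP] with ω hω m hm
  refine tendsto_comp_of_isCompact_of_tendsto isCompact_setOf_isDensityMatrix
    (continuous_finsetSum _ fun i _ => continuous_conjugationDefect (a i))
    (by fun_prop : Continuous fun θ : Matrix (Fin d) (Fin d) ℂ => (θ ^ m).trace)
    (fun ρ hρ hdefect => ?_) (fun n => isDensityMatrix_traj a hθ₀.1 hσ n ω) hω
  rw [(hpure ρ hρ hdefect).pow_eq (Nat.one_le_iff_ne_zero.1 hm), hρ.2]
end

section
/- Let (a_1,…,a_k) be a perfect measurement on the complex d×d matrices and let p be a nonzero dark projection, with constants λ_w ≥ 0 satisfying p A_w* A_w p = λ_w p for every finite word w; write λ_i := λ_{(i)} for the one-letter words. Fix i ∈ {1,…,k} with λ_i > 0, and set q := λ_i^{-1} a_i p a_i*. Then q is an orthogonal projection with rank q = rank p, and q is again a dark projection with constants λ'_w = λ_{i::w}/λ_i; that is, for every finite word w = (i_1,…,i_m), q A_w* A_w q = (λ_{(i,i_1,…,i_m)}/λ_i) q. -/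
open Matrix

/-!
Everything comes from one compression rule. If `q = c⁻¹ b p b*`, then
`q x q = c⁻² b (p b* x b p) b*`, so `p (b* x b) p = m p` gives `q x q = (m / c) q`. For `b = a_i`
and `c = λ_i`, the choice `x = 1` shows that `q` is idempotent and `x = A_w* A_w` that it is dark,
because `A_{i::w} = A_w a_i`. The passage from `p` to `q` is undone by a map of the same shape,
`p = c⁻¹ (p b*) q (p b*)*`, and no such map increases the rank.
-/

section WordProduct

variable {I M : Type*} [Monoid M]

/-- The product `a_{iₙ} ⋯ a_{i₁}` along the word `(i₁,…,iₙ)`: this is `wordMatrix` in an arbitrary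
monoid, for stating darkness over a general star algebra. -/
def wordProduct (a : I → M) (w : List I) : M :=
  (w.reverse.map a).prod

theorem wordProduct_singleton (a : I → M) (i : I) : wordProduct a [i] = a i := by
  simp [wordProduct]

theorem wordProduct_cons (a : I → M) (i : I) (w : List I) :
    wordProduct a (i :: w) = wordProduct a w * a i := by
  simp [wordProduct]

end WordProduct

section StarAlgebra

variable {I K A : Type*} [Field K] [Ring A] [StarRing A] [Algebra K A]

/-- The darkness relations `p A_w* A_w p = λ_w p` of the family `a` at `p`, with constants
`l w = λ_w`. That `p` is a projection is not part of the notion. -/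
def IsDarkWith (a : I → A) (l : List I → K) (p : A) : Prop :=
  ∀ w, p * star (wordProduct a w) * wordProduct a w * p = l w • p

/-- The normalized conjugate `c⁻¹ b p b*`: for `b = a_i` and `c = λ_i` it is the projection `q`
into which the outcome `i` of the measurement transforms `p`. It is `0` when `c = 0`. -/
def normalizedConj (c : K) (b p : A) : A :=
  c⁻¹ • (b * p * star b)

theorem normalizedConj_mul_mul_normalizedConj {b p x : A} {m : K} (c : K)
    (h : p * (star b * x * b) * p = m • p) :
    normalizedConj c b p * x * normalizedConj c b p = (m / c) • normalizedConj c b p := by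
  have hconj : b * p * star b * x * (b * p * star b) = m • (b * p * star b) := by
    calc b * p * star b * x * (b * p * star b)
        = b * (p * (star b * x * b) * p) * star b := by simp only [mul_assoc]
      _ = m • (b * p * star b) := by rw [h, mul_smul_comm, smul_mul_assoc]
  simp only [normalizedConj, smul_mul_assoc, mul_smul_comm, hconj, smul_smul]
  ring_nf

theorem isIdempotentElem_normalizedConj {b p : A} {c : K} (hc : c ≠ 0)
    (h : p * (star b * b) * p = c • p) : IsIdempotentElem (normalizedConj c b p) := by
  have hone : p * (star b * 1 * b) * p = c • p := by rwa [mul_one]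
  simpa only [IsIdempotentElem, mul_one, div_self hc, one_smul] using
    normalizedConj_mul_mul_normalizedConj c hone

theorem normalizedConj_normalizedConj {b p : A} {c : K} (hc : c ≠ 0) (hp : IsSelfAdjoint p)
    (h : p * (star b * b) * p = c • p) :
    normalizedConj c (p * star b) (normalizedConj c b p) = p := by
  have hconj : p * star b * (b * p * star b) * (b * p) = c • c • p := by
    calc p * star b * (b * p * star b) * (b * p)
        = p * (star b * b) * p * (star b * b) * p := by simp only [mul_assoc]
      _ = c • c • p := by rw [h, smul_mul_assoc, smul_mul_assoc, h]
  rw [normalizedConj, normalizedConj, star_mul, star_star, hp.star_eq, mul_smul_comm,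
    smul_mul_assoc, hconj, inv_smul_smul₀ hc, inv_smul_smul₀ hc]

theorem isSelfAdjoint_normalizedConj [StarRing K] [StarModule K A] {b p : A} {c : K} (hc : c ≠ 0)
    (hp : IsSelfAdjoint p) (h : p * (star b * b) * p = c • p) :
    IsSelfAdjoint (normalizedConj c b p) := by
  -- `star c = c` can fail when `p = 0`, so only the actions on `p` are compared.
  have hstar : star c • p = c • p := by
    calc star c • p = star (c • p) := by rw [star_smul, hp.star_eq]
      _ = star (p * (star b * b) * p) := by rw [h]
      _ = p * (star b * b) * p := by simp only [star_mul, star_star, hp.star_eq, mul_assoc]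
      _ = c • p := h
  have hinv : (star c)⁻¹ • p = c⁻¹ • p := by
    rw [inv_smul_eq_iff₀ (star_ne_zero.mpr hc), smul_comm, hstar, inv_smul_smul₀ hc]
  calc star (normalizedConj c b p)
      = b * ((star c)⁻¹ • p) * star b := by
        simp only [normalizedConj, star_smul, star_inv₀, star_mul, star_star, hp.star_eq,
          mul_smul_comm, smul_mul_assoc, mul_assoc]
    _ = normalizedConj c b p := by rw [hinv, mul_smul_comm, smul_mul_assoc, normalizedConj]

theorem IsDarkWith.compression_singleton {a : I → A} {l : List I → K} {p : A}
    (h : IsDarkWith a l p) (i : I) : p * (star (a i) * a i) * p = l [i] • p := by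
  simpa only [wordProduct_singleton, mul_assoc] using h [i]

theorem IsDarkWith.normalizedConj {a : I → A} {l : List I → K} {p : A}
    (h : IsDarkWith a l p) (c : K) (i : I) :
    IsDarkWith a (fun w ↦ l (i :: w) / c) (normalizedConj c (a i) p) := by
  intro w
  have hcons : p * (star (a i) * (star (wordProduct a w) * wordProduct a w) * a i) * p =
      l (i :: w) • p := by
    simpa only [wordProduct_cons, star_mul, mul_assoc] using h (i :: w)
  simpa only [mul_assoc] using normalizedConj_mul_mul_normalizedConj c hcons

end StarAlgebra

section Matrix

variable {I K n : Type*} [Field K] [StarRing K] [Fintype n] [DecidableEq n]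

theorem rank_normalizedConj_le (c : K) (b p : Matrix n n K) :
    (normalizedConj c b p).rank ≤ p.rank := by
  rw [normalizedConj, ← smul_mul_assoc, ← smul_mul_assoc]
  exact (rank_mul_le_left _ _).trans (rank_mul_le_right _ _)

theorem rank_normalizedConj {b p : Matrix n n K} {c : K} (hc : c ≠ 0) (hp : IsSelfAdjoint p)
    (h : p * (star b * b) * p = c • p) : (normalizedConj c b p).rank = p.rank := by
  refine (rank_normalizedConj_le c b p).antisymm ?_
  calc p.rank = (normalizedConj c (p * star b) (normalizedConj c b p)).rank := by
        rw [normalizedConj_normalizedConj hc hp h]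
    _ ≤ (normalizedConj c b p).rank := rank_normalizedConj_le _ _ _

theorem dark_projection_step_general (a : I → Matrix n n K) {p : Matrix n n K}
    (hp : IsSelfAdjoint p) (l : List I → K) (hl : IsDarkWith a l p) {i : I} (hi : l [i] ≠ 0) :
    IsStarProjection (normalizedConj (l [i]) (a i) p) ∧
      (normalizedConj (l [i]) (a i) p).rank = p.rank ∧
      IsDarkWith a (fun w ↦ l (i :: w) / l [i]) (normalizedConj (l [i]) (a i) p) := by
  have h := hl.compression_singleton i
  exact ⟨⟨isIdempotentElem_normalizedConj hi h, isSelfAdjoint_normalizedConj hi hp h⟩,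
    rank_normalizedConj hi hp h, hl.normalizedConj (l [i]) i⟩

end Matrix

/-- If `p` is a nonzero dark projection with constants `λ_w`, and `λ_i > 0`, then
`q := λ_i⁻¹ a_i p a_i*` is again a dark projection of the same rank, with constants
`λ_{i::w}/λ_i`. -/
theorem dark_projection_step {d k : ℕ}
    (a : Fin k → Matrix (Fin d) (Fin d) ℂ)
    (ha : ∑ i, (a i)ᴴ * a i = 1)
    (p : Matrix (Fin d) (Fin d) ℂ)
    (hp : p.IsHermitian ∧ p * p = p) (hp0 : p ≠ 0)
    (l : List (Fin k) → ℝ)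
    (hl : ∀ w : List (Fin k), 0 ≤ l w ∧
      p * (wordMatrix a w)ᴴ * wordMatrix a w * p = (l w : ℂ) • p)
    (i : Fin k) (hi : 0 < l [i]) :
    ((l [i] : ℂ)⁻¹ • (a i * p * (a i)ᴴ)).IsHermitian ∧
    ((l [i] : ℂ)⁻¹ • (a i * p * (a i)ᴴ)) * ((l [i] : ℂ)⁻¹ • (a i * p * (a i)ᴴ)) =
      (l [i] : ℂ)⁻¹ • (a i * p * (a i)ᴴ) ∧
    ((l [i] : ℂ)⁻¹ • (a i * p * (a i)ᴴ)).rank = p.rank ∧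
    ∀ w : List (Fin k),
      ((l [i] : ℂ)⁻¹ • (a i * p * (a i)ᴴ)) * (wordMatrix a w)ᴴ * wordMatrix a w *
          ((l [i] : ℂ)⁻¹ • (a i * p * (a i)ᴴ)) =
        ((l (i :: w) / l [i] : ℝ) : ℂ) • ((l [i] : ℂ)⁻¹ • (a i * p * (a i)ᴴ)) := by
  obtain ⟨⟨hidem, hself⟩, hrank, hdark⟩ := dark_projection_step_general a hp.1
    (fun w ↦ (l w : ℂ)) (fun w ↦ (hl w).2) (Complex.ofReal_ne_zero.mpr hi.ne')
  exact ⟨hself, hidem, hrank, fun w ↦ by rw [Complex.ofReal_div]; exact hdark w⟩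
end
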